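/- arXiv:2012.12952 — 6 statements merged into one kernel-verified Lean document; each statement's English description precedes it below -/
import Mathlib

section
/- Let Y be a geodesic metric space and let E : Y → ℝ ∪ {+∞} be λ-convex, λ ∈ ℝ, and lower semicontinuous, with D(E) nonempty. Then for every y ∈ D(E) the descending slope admits the global representation |∂⁻E|(y) = sup_{z ≠ y} max( (E(y) − E(z))/d(y,z) + (λ/2)·d(y,z), 0 ). -/
open Filter MeasureTheory Set Bornology
open scoped ENNReal Topology NNReal

/-- A (constant-speed, minimizing) geodesic defined on `[0,1]`:
`d(γ_s, γ_t) = |s - t| * d(γ_0, γ_1)` for all `s, t ∈ [0,1]`. -/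
def IsGeodesic {Y : Type*} [MetricSpace Y] (γ : ℝ → Y) : Prop :=
  ∀ s ∈ Set.Icc (0:ℝ) 1, ∀ t ∈ Set.Icc (0:ℝ) 1,
    dist (γ s) (γ t) = |s - t| * dist (γ 0) (γ 1)

/-- A metric space is geodesic if every two points are joined by a geodesic. -/
def GeodesicSpace (Y : Type*) [MetricSpace Y] : Prop :=
  ∀ x y : Y, ∃ γ : ℝ → Y, IsGeodesic γ ∧ γ 0 = x ∧ γ 1 = y

/-- The CAT(0) condition: geodesic space satisfying the comparison inequality
`d²(γ_t, a) ≤ (1-t)·d²(γ_0, a) + t·d²(γ_1, a) − t(1-t)·d²(γ_0, γ_1)`.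
(Completeness is required separately as a typeclass assumption.) -/
def Cat0 (Y : Type*) [MetricSpace Y] : Prop :=
  GeodesicSpace Y ∧
    ∀ γ : ℝ → Y, IsGeodesic γ → ∀ a : Y, ∀ t ∈ Set.Icc (0:ℝ) 1,
      dist (γ t) a ^ 2 ≤ (1 - t) * dist (γ 0) a ^ 2 + t * dist (γ 1) a ^ 2
        - t * (1 - t) * dist (γ 0) (γ 1) ^ 2

/-- A subset is geodesically convex if every geodesic joining two of its points
lies entirely inside it. -/
def GeodesicConvex {Y : Type*} [MetricSpace Y] (C : Set Y) : Prop :=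
  ∀ γ : ℝ → Y, IsGeodesic γ → γ 0 ∈ C → γ 1 ∈ C → ∀ t ∈ Set.Icc (0:ℝ) 1, γ t ∈ C

/-- `lam`-convexity along geodesics of an extended-real-valued functional:
`E(γ_t) ≤ (1-t)E(γ_0) + tE(γ_1) − (lam/2)t(1−t)d²(γ_0,γ_1)`. -/
def LamConvex {Y : Type*} [MetricSpace Y] (lam : ℝ) (E : Y → EReal) : Prop :=
  ∀ γ : ℝ → Y, IsGeodesic γ → ∀ t ∈ Set.Icc (0:ℝ) 1,
    E (γ t) ≤ ((1 - t : ℝ) : EReal) * E (γ 0) + ((t : ℝ) : EReal) * E (γ 1)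
      - ((lam / 2 * t * (1 - t) * dist (γ 0) (γ 1) ^ 2 : ℝ) : EReal)

/-- The descending slope `|∂⁻E|(y) = limsup_{z→y} (E(y)−E(z))⁺ / d(y,z)`,
set to `∞` outside the domain `{E < ∞}` of `E`. -/
noncomputable def descendingSlope {Y : Type*} [MetricSpace Y] (E : Y → EReal) (y : Y) :
    ℝ≥0∞ :=
  if E y = ⊤ then ⊤
  else Filter.limsup (fun z => ENNReal.ofReal ((E y - E z).toReal / dist y z))
      (nhdsWithin y {y}ᶜ)

/-- `ω(y; (y_n)) := limsup_n d(y, y_n)²`. -/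
noncomputable def asymptoticRadius {Y : Type*} [MetricSpace Y] (yn : ℕ → Y) (y : Y) : ℝ :=
  Filter.limsup (fun n => dist y (yn n) ^ 2) Filter.atTop

/-- Weak convergence of a bounded sequence: `y` is an asymptotic center
(i.e. a minimizer of `ω(·; ·)`) of every subsequence. -/
def WeakConv {Y : Type*} [MetricSpace Y] (yn : ℕ → Y) (y : Y) : Prop :=
  Bornology.IsBounded (Set.range yn) ∧
    ∀ φ : ℕ → ℕ, StrictMono φ →
      ∀ z : Y, asymptoticRadius (yn ∘ φ) y ≤ asymptoticRadius (yn ∘ φ) z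

/-- Absolute continuity on a set `I ⊆ ℝ`: there is a nonnegative integrable `g`
with `d(y_s, y_t) ≤ ∫_s^t g` for `s ≤ t` in `I`. -/
def AbsContOnSet {Y : Type*} [MetricSpace Y] (y : ℝ → Y) (I : Set ℝ) : Prop :=
  ∃ g : ℝ → ℝ, (∀ t, 0 ≤ g t) ∧ MeasureTheory.IntegrableOn g I ∧
    ∀ s ∈ I, ∀ t ∈ I, s ≤ t → dist (y s) (y t) ≤ ∫ r in s..t, g r

/-- Absolute continuity on the interval `[a,b]`. -/
def AbsContOn {Y : Type*} [MetricSpace Y] (y : ℝ → Y) (a b : ℝ) : Prop :=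
  AbsContOnSet y (Set.Icc a b)

/-- Local absolute continuity on `(0,∞)`. -/
def LocAbsCont {Y : Type*} [MetricSpace Y] (y : ℝ → Y) : Prop :=
  ∀ a b : ℝ, 0 < a → a ≤ b → AbsContOn y a b

/-- The Evolution Variational Inequality: for every `z`, for a.e. `t > 0` the
derivative of `t ↦ ½ d²(y_t, z)` exists and
`(d/dt)(½d²(y_t,z)) + E(y_t) + (lam/2)d²(y_t,z) ≤ E(z)`. -/
def EVI {Y : Type*} [MetricSpace Y] (lam : ℝ) (E : Y → EReal) (y : ℝ → Y) : Prop :=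
  ∀ z : Y, ∀ᵐ t ∂(MeasureTheory.volume.restrict (Set.Ioi (0:ℝ))),
    ∃ d' : ℝ, HasDerivAt (fun s => dist (y s) z ^ 2 / 2) d' t ∧
      (d' : EReal) + E (y t) + ((lam / 2 * dist (y t) z ^ 2 : ℝ) : EReal) ≤ E z

/-- A gradient flow trajectory for `E` starting from `y₀`: a locally absolutely
continuous curve on `(0,∞)` converging to `y₀` at `0` and satisfying the EVI. -/
def GradientFlow {Y : Type*} [MetricSpace Y] (lam : ℝ) (E : Y → EReal) (y₀ : Y)
    (y : ℝ → Y) : Prop :=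
  LocAbsCont y ∧ Filter.Tendsto y (nhdsWithin 0 (Set.Ioi 0)) (nhds y₀) ∧ EVI lam E y

/-- Along a geodesic leaving `y`, `lam`-convexity bounds the difference quotient of `E` from
below. -/
theorem LamConvex.le_slope_along_geodesic {Y : Type*} [MetricSpace Y] {lam : ℝ} {E : Y → EReal}
    (hbot : ∀ y, E y ≠ ⊥) (hconv : LamConvex lam E) {γ : ℝ → Y} (hγ : IsGeodesic γ)
    (hne : γ 0 ≠ γ 1) (h0 : E (γ 0) ≠ ⊤) (h1 : E (γ 1) ≠ ⊤) {t : ℝ} (ht : t ∈ Set.Ioc (0:ℝ) 1) :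
    (E (γ 0) - E (γ 1)).toReal / dist (γ 0) (γ 1) + lam / 2 * (1 - t) * dist (γ 0) (γ 1) ≤
      (E (γ 0) - E (γ t)).toReal / dist (γ 0) (γ t) := by
  have hd : 0 < dist (γ 0) (γ 1) := dist_pos.2 hne
  have hdt : dist (γ 0) (γ t) = t * dist (γ 0) (γ 1) := by
    rw [hγ 0 (by simp) t ⟨ht.1.le, ht.2⟩, zero_sub, abs_neg, abs_of_pos ht.1]
  have hE := hconv γ hγ t ⟨ht.1.le, ht.2⟩
  rw [hdt]
  have hbt := hbot (γ t)
  generalize dist (γ 0) (γ 1) = d at hd hE ⊢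
  lift E (γ 0) to ℝ using ⟨h0, hbot _⟩ with a
  lift E (γ 1) to ℝ using ⟨h1, hbot _⟩ with b
  have htop : E (γ t) ≠ ⊤ := by
    refine ne_top_of_le_ne_top ?_ hE
    exact_mod_cast EReal.coe_ne_top _
  lift E (γ t) to ℝ using ⟨htop, hbt⟩ with c
  norm_cast at hE
  simp only [← EReal.coe_sub, EReal.toReal_coe]
  rw [le_div_iff₀ (mul_pos ht.1 hd)]
  have : ((a - b) / d + lam / 2 * (1 - t) * d) * (t * d)
      = t * (a - b) + lam / 2 * t * (1 - t) * d ^ 2 := by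
    field_simp
  linarith

/-- Each global difference quotient is bounded by the descending slope. -/
theorem LamConvex.ofReal_le_descendingSlope {Y : Type*} [MetricSpace Y]
    (hgeo : GeodesicSpace Y) {lam : ℝ} {E : Y → EReal} (hbot : ∀ y, E y ≠ ⊥)
    (hconv : LamConvex lam E) {y z : Y} (hy : E y ≠ ⊤) (hzy : z ≠ y) (hz : E z ≠ ⊤) :
    ENNReal.ofReal ((E y - E z).toReal / dist y z + lam / 2 * dist y z) ≤
      descendingSlope E y := by
  obtain ⟨γ, hγ, rfl, rfl⟩ := hgeo y z
  rw [descendingSlope, if_neg hy]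
  have hIoc : ∀ᶠ t in 𝓝[>] (0:ℝ), t ∈ Set.Ioc (0:ℝ) 1 := Ioc_mem_nhdsGT one_pos
  have hdist : ∀ t ∈ Set.Ioc (0:ℝ) 1, dist (γ t) (γ 0) = t * dist (γ 0) (γ 1) := fun t ht ↦ by
    rw [hγ t ⟨ht.1.le, ht.2⟩ 0 (by simp), sub_zero, abs_of_pos ht.1]
  have hlim : Tendsto γ (𝓝[>] 0) (𝓝[{γ 0}ᶜ] (γ 0)) := by
    refine tendsto_nhdsWithin_iff.2 ⟨tendsto_iff_dist_tendsto_zero.2 ?_, ?_⟩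
    · have h : Tendsto (fun t : ℝ ↦ t * dist (γ 0) (γ 1)) (𝓝[>] 0) (𝓝 0) := by
        refine tendsto_nhdsWithin_of_tendsto_nhds ?_
        exact Continuous.tendsto' (by fun_prop) _ _ (by simp)
      exact h.congr' (hIoc.mono fun t ht ↦ (hdist t ht).symm)
    · filter_upwards [hIoc] with t ht
      exact dist_pos.1 (hdist t ht ▸ mul_pos ht.1 (dist_pos.2 hzy.symm))
  have hquot : Tendsto (fun t : ℝ ↦ ENNReal.ofReal
      ((E (γ 0) - E (γ 1)).toReal / dist (γ 0) (γ 1) + lam / 2 * (1 - t) * dist (γ 0) (γ 1)))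
      (𝓝[>] 0) (𝓝 (ENNReal.ofReal
        ((E (γ 0) - E (γ 1)).toReal / dist (γ 0) (γ 1) + lam / 2 * dist (γ 0) (γ 1)))) := by
    refine ENNReal.tendsto_ofReal (tendsto_nhdsWithin_of_tendsto_nhds ?_)
    exact Continuous.tendsto' (by fun_prop) _ _ (by simp)
  rw [← hquot.limsup_eq]
  calc _ ≤ limsup ((fun w ↦ ENNReal.ofReal ((E (γ 0) - E w).toReal / dist (γ 0) w)) ∘ γ)
        (𝓝[>] 0) := limsup_le_limsup <| hIoc.mono fun t ht ↦
          ENNReal.ofReal_le_ofReal (hconv.le_slope_along_geodesic hbot hγ hzy.symm hy hz ht)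
    _ ≤ _ := by
      rw [limsup_comp]
      exact limsSup_le_limsSup_of_le (map_mono hlim)

/-- The descending slope is bounded by the supremum of the global difference quotients; this
needs no convexity. -/
theorem descendingSlope_le_iSup {Y : Type*} [MetricSpace Y] (lam : ℝ) {E : Y → EReal} {y : Y}
    (hy : E y ≠ ⊤) :
    descendingSlope E y ≤
      ⨆ z ∈ {z : Y | z ≠ y ∧ E z ≠ ⊤},
        ENNReal.ofReal ((E y - E z).toReal / dist y z + lam / 2 * dist y z) := by
  rw [descendingSlope, if_neg hy]
  set S := ⨆ z ∈ {z : Y | z ≠ y ∧ E z ≠ ⊤},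
    ENNReal.ofReal ((E y - E z).toReal / dist y z + lam / 2 * dist y z)
  have hbound : ∀ z ∈ ({y}ᶜ : Set Y), ENNReal.ofReal ((E y - E z).toReal / dist y z) ≤
      S + ENNReal.ofReal (-(lam / 2 * dist y z)) := by
    intro z hzy
    by_cases hz : E z = ⊤
    · simp [hz]
    calc ENNReal.ofReal ((E y - E z).toReal / dist y z)
        = ENNReal.ofReal (((E y - E z).toReal / dist y z + lam / 2 * dist y z)
            + -(lam / 2 * dist y z)) := by rw [add_neg_cancel_right]
      _ ≤ _ := ENNReal.ofReal_add_le
      _ ≤ _ := by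
        gcongr
        exact le_iSup₂_of_le z ⟨hzy, hz⟩ le_rfl
  have hlim : Tendsto (fun z ↦ S + ENNReal.ofReal (-(lam / 2 * dist y z))) (𝓝[{y}ᶜ] y) (𝓝 S) := by
    have h : Tendsto (fun z ↦ ENNReal.ofReal (-(lam / 2 * dist y z))) (𝓝[{y}ᶜ] y) (𝓝 0) := by
      rw [← ENNReal.ofReal_zero]
      refine ENNReal.tendsto_ofReal (tendsto_nhdsWithin_of_tendsto_nhds ?_)
      exact Continuous.tendsto' (by fun_prop) _ _ (by simp)
    simpa using tendsto_const_nhds.add h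
  rcases (𝓝[{y}ᶜ] y).eq_or_neBot with hb | hb
  · simp [hb]
  · rw [← hlim.limsup_eq]
    exact limsup_le_limsup (eventually_nhdsWithin_of_forall hbound)

/-- **Global representation of the descending slope of a `λ`-convex lower semicontinuous
functional on a geodesic space**:
`|∂⁻E|(y) = sup_{z ≠ y} ((E(y) − E(z))/d(y,z) + (λ/2)d(y,z))⁺`
(points `z` with `E z = ∞` contribute `0` to the supremum). -/
theorem descendingSlope_global_representation {Y : Type*} [MetricSpace Y]
    (hgeo : GeodesicSpace Y) (lam : ℝ) (E : Y → EReal)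
    (hbot : ∀ y, E y ≠ ⊥) (hconv : LamConvex lam E) (hlsc : LowerSemicontinuous E)
    (hdom : ∃ y, E y ≠ ⊤) (y : Y) (hy : E y ≠ ⊤) :
    descendingSlope E y =
      ⨆ z ∈ {z : Y | z ≠ y ∧ E z ≠ ⊤},
        ENNReal.ofReal ((E y - E z).toReal / dist y z + lam / 2 * dist y z) := by
  exact le_antisymm (descendingSlope_le_iSup lam hy) <| iSup₂_le fun _ hz ↦
    hconv.ofReal_le_descendingSlope hgeo hbot hy hz.1 hz.2
end

section
/- Let Y be a CAT(0) space, (y_n) a sequence in Y and y ∈ Y. Then d(y_n, y) → 0 if and only if y_n converges weakly to y and d(y_n, z) → d(y, z) for some z ∈ Y. -/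
open Filter MeasureTheory Set Bornology
open scoped ENNReal Topology NNReal

/-- Along a bounded sequence the squared distances to a fixed point are bounded above. -/
lemma isBoundedUnder_dist_sq {Y : Type*} [MetricSpace Y] {yn : ℕ → Y}
    (hb : IsBounded (range yn)) (z : Y) :
    IsBoundedUnder (· ≤ ·) atTop (fun n => dist z (yn n) ^ 2) := by
  obtain ⟨r, hr⟩ := hb.subset_closedBall z
  refine isBoundedUnder_of ⟨r ^ 2, fun n => ?_⟩
  have h := hr (mem_range_self n)
  rw [Metric.mem_closedBall, dist_comm] at h
  exact pow_le_pow_left₀ dist_nonneg h 2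

lemma isCoboundedUnder_dist_sq {Y : Type*} [MetricSpace Y] (yn : ℕ → Y) (z : Y) :
    IsCoboundedUnder (· ≤ ·) atTop (fun n => dist z (yn n) ^ 2) :=
  IsBoundedUnder.isCoboundedUnder_le (isBoundedUnder_of ⟨0, fun _ => sq_nonneg _⟩)

lemma asymptoticRadius_nonneg {Y : Type*} [MetricSpace Y] {yn : ℕ → Y}
    (hb : IsBounded (range yn)) (z : Y) : 0 ≤ asymptoticRadius yn z :=
  le_limsup_of_frequently_le (Frequently.of_forall fun _ => sq_nonneg _)
    (isBoundedUnder_dist_sq hb z)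

/-- A convergent sequence converges weakly to its limit. -/
lemma WeakConv.of_tendsto {Y : Type*} [MetricSpace Y] {yn : ℕ → Y} {y : Y}
    (h : Tendsto yn atTop (𝓝 y)) : WeakConv yn y := by
  have hb := Metric.isBounded_range_of_tendsto yn h
  refine ⟨hb, fun φ hφ z => ?_⟩
  have hlim : Tendsto (fun n => dist y ((yn ∘ φ) n) ^ 2) atTop (𝓝 0) := by
    simpa using ((tendsto_const_nhds (x := y)).dist (h.comp hφ.tendsto_atTop)).pow 2
  rw [asymptoticRadius, hlim.limsup_eq]
  exact asymptoticRadius_nonneg (hb.subset (range_comp_subset_range φ yn)) z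

/-- If `d(y_n, z) → d(y, z)`, the asymptotic radius at a point `γ_t` of a geodesic from `y` to `z`
satisfies `ω(γ_t) ≤ (1 - t) ω(y) + t² d²(y, z)`. -/
lemma Cat0.asymptoticRadius_le {Y : Type*} [MetricSpace Y] (hY : Cat0 Y) {yn : ℕ → Y}
    (hb : IsBounded (range yn)) {γ : ℝ → Y} (hγ : IsGeodesic γ)
    (hlim : Tendsto (fun n => dist (yn n) (γ 1)) atTop (𝓝 (dist (γ 0) (γ 1))))
    {t : ℝ} (ht : t ∈ Icc (0 : ℝ) 1) :
    asymptoticRadius yn (γ t) ≤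
      (1 - t) * asymptoticRadius yn (γ 0) + t ^ 2 * dist (γ 0) (γ 1) ^ 2 := by
  refine le_of_forall_pos_le_add fun δ hδ => ?_
  refine limsup_le_of_le (isCoboundedUnder_dist_sq yn (γ t)) ?_
  have hradius : ∀ᶠ n in atTop, dist (γ 0) (yn n) ^ 2 < asymptoticRadius yn (γ 0) + δ :=
    eventually_lt_of_limsup_lt (lt_add_of_pos_right _ hδ) (isBoundedUnder_dist_sq hb (γ 0))
  have hdist : ∀ᶠ n in atTop, dist (yn n) (γ 1) ^ 2 < dist (γ 0) (γ 1) ^ 2 + δ :=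
    (hlim.pow 2).eventually_lt_const (lt_add_of_pos_right _ hδ)
  filter_upwards [hradius, hdist] with n h₀ h₁
  have hcat := hY.2 γ hγ (yn n) t ht
  rw [dist_comm (γ 1)] at hcat
  have h₀' := mul_le_mul_of_nonneg_left h₀.le (sub_nonneg.2 ht.2)
  have h₁' := mul_le_mul_of_nonneg_left h₁.le ht.1
  linarith

/-- If `y` is an asymptotic center of a bounded sequence and `d(y_n, z) → d(y, z)`, then the
asymptotic radius at `y` vanishes. -/
lemma Cat0.asymptoticRadius_eq_zero {Y : Type*} [MetricSpace Y] (hY : Cat0 Y) {yn : ℕ → Y}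
    (hb : IsBounded (range yn)) {y z : Y}
    (hmin : ∀ x, asymptoticRadius yn y ≤ asymptoticRadius yn x)
    (hlim : Tendsto (fun n => dist (yn n) z) atTop (𝓝 (dist y z))) :
    asymptoticRadius yn y = 0 := by
  obtain ⟨γ, hγ, rfl, rfl⟩ := hY.1 y z
  refine le_antisymm ?_ (asymptoticRadius_nonneg hb _)
  have hle : ∀ t ∈ Ioc (0 : ℝ) 1, asymptoticRadius yn (γ 0) ≤ t * dist (γ 0) (γ 1) ^ 2 := by
    intro t ht
    have h := (hmin (γ t)).trans (hY.asymptoticRadius_le hb hγ hlim (Ioc_subset_Icc_self ht))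
    exact le_of_mul_le_mul_left (by linarith) ht.1
  have hzero : Tendsto (fun t : ℝ => t * dist (γ 0) (γ 1) ^ 2) (𝓝[>] 0) (𝓝 0) := by
    refine tendsto_nhdsWithin_of_tendsto_nhds ?_
    simpa using (tendsto_id (x := 𝓝 (0 : ℝ))).mul_const (dist (γ 0) (γ 1) ^ 2)
  refine ge_of_tendsto hzero ?_
  filter_upwards [Ioc_mem_nhdsGT (zero_lt_one' ℝ)] with t ht using hle t ht

lemma tendsto_dist_of_asymptoticRadius_eq_zero {Y : Type*} [MetricSpace Y] {yn : ℕ → Y}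
    (hb : IsBounded (range yn)) {y : Y} (h : asymptoticRadius yn y = 0) :
    Tendsto (fun n => dist (yn n) y) atTop (𝓝 0) := by
  refine tendsto_order.2 ⟨fun a ha => Eventually.of_forall fun n => ha.trans_le dist_nonneg,
    fun ε hε => ?_⟩
  have hlt : asymptoticRadius yn y < ε ^ 2 := h ▸ pow_pos hε 2
  filter_upwards [eventually_lt_of_limsup_lt hlt (isBoundedUnder_dist_sq hb y)] with n hn
  rw [dist_comm]
  exact lt_of_pow_lt_pow_left₀ 2 hε.le hn

/-- **Strong convergence = weak convergence + convergence of one distance**: in a CAT(0)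
space, `d(y_n, y) → 0` iff `y_n ⇀ y` and `d(y_n, z) → d(y, z)` for some `z`. -/
theorem strong_iff_weak_and_dist_tendsto {Y : Type*} [MetricSpace Y] [CompleteSpace Y]
    (hY : Cat0 Y) (yn : ℕ → Y) (y : Y) :
    Filter.Tendsto (fun n => dist (yn n) y) Filter.atTop (nhds 0) ↔
      WeakConv yn y ∧
        ∃ z : Y, Filter.Tendsto (fun n => dist (yn n) z) Filter.atTop
          (nhds (dist y z)) := by
  refine ⟨fun h => ?_, fun ⟨⟨hb, hmin⟩, z, hz⟩ => ?_⟩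
  · exact ⟨.of_tendsto (tendsto_iff_dist_tendsto_zero.2 h), y, by simpa using h⟩
  · exact tendsto_dist_of_asymptoticRadius_eq_zero hb
      (hY.asymptoticRadius_eq_zero hb (hmin id strictMono_id) hz)
end

section
/- Let Y be a CAT(0) space. Then every bounded sequence in Y admits a subsequence which converges weakly to some point of Y. -/
open Filter MeasureTheory Set Bornology
open scoped ENNReal Topology NNReal

/-- The `limsup` along `L` of the squared distance from `y` to the family `yn`. -/
noncomputable def limsupSqDist {Y : Type*} [MetricSpace Y] (yn : ℕ → Y) (L : Filter ℕ) (y : Y) :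
    ℝ :=
  limsup (fun n => dist y (yn n) ^ 2) L

/-- The infimum over all centers of `limsupSqDist`. -/
noncomputable def infLimsupSqDist {Y : Type*} [MetricSpace Y] (yn : ℕ → Y) (L : Filter ℕ) : ℝ :=
  ⨅ y, limsupSqDist yn L y

section LimsupSqDist

variable {Y : Type*} [MetricSpace Y] {yn : ℕ → Y}

theorem exists_forall_dist_le (hbd : IsBounded (range yn)) (y : Y) :
    ∃ C, ∀ n, dist y (yn n) ≤ C := by
  obtain ⟨C, hC⟩ := hbd.subset_closedBall y
  exact ⟨C, fun n => by rw [dist_comm]; exact hC (mem_range_self n)⟩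

theorem isBoundedUnder_sqDist (hbd : IsBounded (range yn)) (L : Filter ℕ) (y : Y) :
    IsBoundedUnder (· ≤ ·) L (fun n => dist y (yn n) ^ 2) := by
  obtain ⟨C, hC⟩ := exists_forall_dist_le hbd y
  exact isBoundedUnder_of ⟨C ^ 2, fun n => pow_le_pow_left₀ dist_nonneg (hC n) 2⟩

theorem isCoboundedUnder_sqDist (yn : ℕ → Y) (L : Filter ℕ) [L.NeBot] (y : Y) :
    IsCoboundedUnder (· ≤ ·) L (fun n => dist y (yn n) ^ 2) :=
  IsBoundedUnder.isCoboundedUnder_le (isBoundedUnder_of ⟨0, fun _ => sq_nonneg _⟩)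

theorem limsupSqDist_le {L : Filter ℕ} [L.NeBot] {y : Y} {a : ℝ}
    (h : ∀ᶠ n in L, dist y (yn n) ^ 2 ≤ a) : limsupSqDist yn L y ≤ a :=
  limsup_le_of_le (isCoboundedUnder_sqDist yn L y) h

theorem eventually_lt_of_limsupSqDist_lt (hbd : IsBounded (range yn)) {L : Filter ℕ} {y : Y}
    {a : ℝ} (h : limsupSqDist yn L y < a) : ∀ᶠ n in L, dist y (yn n) ^ 2 < a :=
  eventually_lt_of_limsup_lt h (isBoundedUnder_sqDist hbd L y)

theorem limsupSqDist_nonneg (hbd : IsBounded (range yn)) (L : Filter ℕ) [L.NeBot] (y : Y) :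
    0 ≤ limsupSqDist yn L y :=
  le_limsup_of_frequently_le (Frequently.of_forall fun _ => sq_nonneg _)
    (isBoundedUnder_sqDist hbd L y)

theorem limsupSqDist_mono (hbd : IsBounded (range yn)) {L L' : Filter ℕ} [L'.NeBot] (h : L' ≤ L)
    (y : Y) : limsupSqDist yn L' y ≤ limsupSqDist yn L y :=
  le_of_forall_gt_imp_ge_of_dense fun _ ha =>
    limsupSqDist_le
      (((eventually_lt_of_limsupSqDist_lt hbd ha).filter_mono h).mono fun _ => le_of_lt)

theorem bddBelow_range_limsupSqDist (hbd : IsBounded (range yn)) (L : Filter ℕ) [L.NeBot] :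
    BddBelow (range (limsupSqDist yn L)) :=
  ⟨0, by rintro _ ⟨y, rfl⟩; exact limsupSqDist_nonneg hbd L y⟩

theorem infLimsupSqDist_le (hbd : IsBounded (range yn)) (L : Filter ℕ) [L.NeBot] (y : Y) :
    infLimsupSqDist yn L ≤ limsupSqDist yn L y :=
  ciInf_le (bddBelow_range_limsupSqDist hbd L) y

theorem infLimsupSqDist_nonneg (hbd : IsBounded (range yn)) (L : Filter ℕ) [L.NeBot] :
    0 ≤ infLimsupSqDist yn L :=
  Real.iInf_nonneg fun y => limsupSqDist_nonneg hbd L y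

theorem infLimsupSqDist_mono (hbd : IsBounded (range yn)) {L L' : Filter ℕ} [L'.NeBot]
    (h : L' ≤ L) : infLimsupSqDist yn L' ≤ infLimsupSqDist yn L :=
  ciInf_mono (bddBelow_range_limsupSqDist hbd L') fun y => limsupSqDist_mono hbd h y

/-- Strong midpoint convexity of the asymptotic squared distance in a CAT(0) space. -/
theorem Cat0.exists_limsupSqDist_midpoint_le (hY : Cat0 Y) (hbd : IsBounded (range yn))
    (L : Filter ℕ) [L.NeBot] (x y : Y) :
    ∃ m, limsupSqDist yn L m ≤
      (limsupSqDist yn L x + limsupSqDist yn L y) / 2 - dist x y ^ 2 / 4 := by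
  obtain ⟨γ, hγ, rfl, rfl⟩ := hY.1 x y
  refine ⟨γ (1 / 2), le_of_forall_pos_le_add fun ε hε => limsupSqDist_le ?_⟩
  filter_upwards [eventually_lt_of_limsupSqDist_lt hbd
      (lt_add_of_pos_right (limsupSqDist yn L (γ 0)) hε),
    eventually_lt_of_limsupSqDist_lt hbd
      (lt_add_of_pos_right (limsupSqDist yn L (γ 1)) hε)] with n h₀ h₁
  have := hY.2 γ hγ (yn n) (1 / 2) (by norm_num)
  linarith

theorem limsupSqDist_le_add (hbd : IsBounded (range yn)) (L : Filter ℕ) [L.NeBot] {x : Y} {C : ℝ}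
    (hC : ∀ n, dist x (yn n) ≤ C) (x' : Y) :
    limsupSqDist yn L x ≤ limsupSqDist yn L x' + dist x x' * (2 * C + dist x x') := by
  refine le_of_forall_pos_le_add fun ε hε => limsupSqDist_le ?_
  filter_upwards [eventually_lt_of_limsupSqDist_lt hbd
    (lt_add_of_pos_right (limsupSqDist yn L x') hε)] with n hn
  have h₁ := dist_triangle x x' (yn n)
  have h₂ := dist_triangle_left x' (yn n) x
  have h₃ := hC n
  have h₄ : (0 : ℝ) ≤ dist x x' := dist_nonneg
  have h₅ : (0 : ℝ) ≤ dist x (yn n) + dist x' (yn n) := by positivity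
  have h₆ : (dist x (yn n) - dist x' (yn n)) * (dist x (yn n) + dist x' (yn n)) ≤
      dist x x' * (2 * C + dist x x') :=
    mul_le_mul (by linarith) (by linarith) h₅ h₄
  linarith

/-- Existence of asymptotic centers along a filter. -/
theorem Cat0.exists_limsupSqDist_eq_inf [CompleteSpace Y] (hY : Cat0 Y)
    (hbd : IsBounded (range yn)) (L : Filter ℕ) [L.NeBot] :
    ∃ c, limsupSqDist yn L c = infLimsupSqDist yn L := by
  have : Nonempty Y := ⟨yn 0⟩
  set r := infLimsupSqDist yn L
  have hex : ∀ k : ℕ, ∃ x, limsupSqDist yn L x < r + 1 / ((k : ℝ) + 1) := fun k =>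
    exists_lt_of_ciInf_lt (lt_add_of_pos_right _ Nat.one_div_pos_of_nat)
  choose x hx using hex
  have hle : ∀ N k : ℕ, N ≤ k → limsupSqDist yn L (x k) ≤ r + 1 / ((N : ℝ) + 1) := fun N k h =>
    (hx k).le.trans (by gcongr)
  have hlim : Tendsto (fun N : ℕ => 1 / ((N : ℝ) + 1)) atTop (𝓝 0) :=
    tendsto_one_div_add_atTop_nhds_zero_nat
  have hcauchy : CauchySeq x := by
    refine cauchySeq_of_le_tendsto_0 (fun N : ℕ => √(4 * (1 / ((N : ℝ) + 1)))) ?_ ?_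
    · intro k l N hk hl
      apply Real.le_sqrt_of_sq_le
      obtain ⟨m, hm⟩ := hY.exists_limsupSqDist_midpoint_le hbd L (x k) (x l)
      linarith [infLimsupSqDist_le hbd L m, hle N k hk, hle N l hl]
    · simpa using (hlim.const_mul 4).sqrt
  obtain ⟨c, hc⟩ := cauchySeq_tendsto_of_complete hcauchy
  refine ⟨c, le_antisymm ?_ (infLimsupSqDist_le hbd L c)⟩
  obtain ⟨C, hC⟩ := exists_forall_dist_le hbd c
  have hd : Tendsto (fun k => dist c (x k)) atTop (𝓝 0) := by
    simpa using (tendsto_const_nhds (x := c)).dist hc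
  have hbound : Tendsto (fun k : ℕ => r + 1 / ((k : ℝ) + 1) +
      dist c (x k) * (2 * C + dist c (x k))) atTop (𝓝 r) := by
    simpa using (hlim.const_add r).add (hd.mul (hd.const_add (2 * C)))
  exact ge_of_tendsto' hbound fun k =>
    (limsupSqDist_le_add hbd L hC (x k)).trans (by linarith [hx k])

end LimsupSqDist

/-- A monotone functional, bounded below, on countably generated proper filters is constant below
some such filter. -/
theorem exists_regular_filter {α : Type*} (R : Filter α → ℝ) (hR₀ : ∀ L, L.NeBot → 0 ≤ R L)
    (hR : ∀ L L' : Filter α, L'.NeBot → L' ≤ L → R L' ≤ R L)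
    (L₀ : Filter α) [L₀.NeBot] [L₀.IsCountablyGenerated] :
    ∃ L ≤ L₀, L.NeBot ∧ L.IsCountablyGenerated ∧
      ∀ L' ≤ L, L'.NeBot → L'.IsCountablyGenerated → R L ≤ R L' := by
  let P := {L : Filter α // L.NeBot ∧ L.IsCountablyGenerated}
  have step : ∀ (k : ℕ) (L : P), ∃ L' : P, L'.1 ≤ L.1 ∧
      ∀ M : P, M.1 ≤ L'.1 → R L'.1 ≤ R M.1 + 1 / ((k : ℝ) + 1) := by
    intro k L
    have : Nonempty {M : P // M.1 ≤ L.1} := ⟨⟨L, le_rfl⟩⟩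
    have hbdd : BddBelow (range fun M : {M : P // M.1 ≤ L.1} => R M.1.1) :=
      ⟨0, by rintro _ ⟨M, rfl⟩; exact hR₀ _ M.1.2.1⟩
    obtain ⟨L', hL'⟩ := exists_lt_of_ciInf_lt
      (lt_add_of_pos_right (⨅ M : {M : P // M.1 ≤ L.1}, R M.1.1)
        (Nat.one_div_pos_of_nat (α := ℝ) (n := k)))
    refine ⟨L'.1, L'.2, fun M hM => hL'.le.trans ?_⟩
    gcongr
    exact ciInf_le hbdd ⟨M, hM.trans L'.2⟩
  choose next hnext hreg using step
  let S : ℕ → P := fun k => Nat.rec ⟨L₀, ‹_›, ‹_›⟩ next k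
  have hanti : Antitone fun k => (S k).1 := antitone_nat_of_succ_le fun k => hnext k (S k)
  have hne : ∀ k, (S k).1.NeBot := fun k => (S k).2.1
  have hcg : ∀ k, (S k).1.IsCountablyGenerated := fun k => (S k).2.2
  have hinf : (⨅ k, (S k).1).NeBot := by
    have : Nonempty α := L₀.nonempty_of_neBot
    exact iInf_neBot_of_directed hanti.directed_ge hne
  refine ⟨⨅ k, (S k).1, iInf_le _ 0, hinf, inferInstance, fun L' hL' hne' hcg' => ?_⟩
  have hlim : Tendsto (fun k : ℕ => R L' + 1 / ((k : ℝ) + 1)) atTop (𝓝 (R L')) := by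
    simpa using (tendsto_one_div_add_atTop_nhds_zero_nat (𝕜 := ℝ)).const_add (R L')
  refine ge_of_tendsto' hlim fun k => ?_
  exact (hR _ _ hinf (iInf_le _ (k + 1))).trans
    (hreg k (S k) ⟨L', hne', hcg'⟩ (hL'.trans (iInf_le _ (k + 1))))

/-- **Weak sequential compactness of bounded sequences in a CAT(0) space**: every bounded
sequence admits a weakly converging subsequence. -/
theorem bounded_exists_weakConv_subseq {Y : Type*} [MetricSpace Y] [CompleteSpace Y]
    (hY : Cat0 Y) (yn : ℕ → Y) (hbd : Bornology.IsBounded (Set.range yn)) :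
    ∃ φ : ℕ → ℕ, StrictMono φ ∧ ∃ y : Y, WeakConv (yn ∘ φ) y := by
  obtain ⟨L, hL, hne, hcg, hmin⟩ := exists_regular_filter (infLimsupSqDist yn)
    (fun L _ => infLimsupSqDist_nonneg hbd L)
    (fun _ _ _ h => infLimsupSqDist_mono hbd h) atTop
  obtain ⟨u, hu⟩ := exists_seq_tendsto L
  obtain ⟨ψ, hψ, huψ⟩ := strictMono_subseq_of_tendsto_atTop (hu.mono_right hL)
  obtain ⟨c, hc⟩ := hY.exists_limsupSqDist_eq_inf hbd L
  refine ⟨u ∘ ψ, huψ, c, hbd.subset (range_comp_subset_range _ _), fun θ hθ z => ?_⟩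
  have hle : map ((u ∘ ψ) ∘ θ) atTop ≤ L :=
    (hu.comp hψ.tendsto_atTop).comp hθ.tendsto_atTop
  calc limsupSqDist yn (map ((u ∘ ψ) ∘ θ) atTop) c
      ≤ limsupSqDist yn L c := limsupSqDist_mono hbd hle c
    _ = infLimsupSqDist yn L := hc
    _ ≤ infLimsupSqDist yn (map ((u ∘ ψ) ∘ θ) atTop) := hmin _ hle inferInstance inferInstance
    _ ≤ limsupSqDist yn (map ((u ∘ ψ) ∘ θ) atTop) z := infLimsupSqDist_le hbd _ z
end

section
/- Let Y be a CAT(0) space and E : Y → ℝ ∪ {+∞} a convex (i.e. 0-convex) and lower semicontinuous functional. Then E is sequentially weakly lower semicontinuous: if y_n converges weakly to y, then E(y) ≤ liminf_n E(y_n). -/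
open Filter MeasureTheory Set Bornology
open scoped ENNReal Topology NNReal

/-- Sublevel sets of a convex functional are geodesically convex. -/
theorem LamConvex.geodesicConvex_sublevel {Y : Type*} [MetricSpace Y] {E : Y → EReal}
    (hconv : LamConvex 0 E) (c : ℝ) : GeodesicConvex {x | E x ≤ (c : EReal)} := by
  intro γ hγ h0 h1 t ht
  simp only [Set.mem_ofPred_eq] at h0 h1 ⊢
  have h := hconv γ hγ t ht
  simp only [zero_div, zero_mul, EReal.coe_zero, sub_zero] at h
  have hs : (0 : EReal) ≤ ((1 - t : ℝ) : EReal) := EReal.coe_nonneg.2 (by linarith [ht.2])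
  have ht0 : (0 : EReal) ≤ (t : EReal) := EReal.coe_nonneg.2 ht.1
  calc E (γ t) ≤ ((1 - t : ℝ) : EReal) * E (γ 0) + (t : EReal) * E (γ 1) := h
    _ ≤ ((1 - t : ℝ) : EReal) * (c : EReal) + (t : EReal) * (c : EReal) :=
        add_le_add (mul_le_mul_of_nonneg_left h0 hs) (mul_le_mul_of_nonneg_left h1 ht0)
    _ = (c : EReal) := by
        rw [← EReal.coe_mul, ← EReal.coe_mul, ← EReal.coe_add]
        congr 1
        ring

/-- A point at positive distance from a geodesically convex set `C` of a CAT(0) space can be moved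
to a point of `C` (an almost nearest point) that is closer, uniformly in squared distance, to all
points of `C` in a given ball. -/
theorem Cat0.exists_dist_sq_add_le {Y : Type*} [MetricSpace Y] (hY : Cat0 Y) {C : Set Y}
    (hC : GeodesicConvex C) {y : Y} (hy : y ∉ closure C) (R : ℝ)
    (hne : (C ∩ Metric.closedBall y R).Nonempty) :
    ∃ p ∈ C, ∃ δ > 0, ∀ z ∈ C ∩ Metric.closedBall y R, dist p z ^ 2 + δ ≤ dist y z ^ 2 := by
  have hCne : C.Nonempty := hne.mono Set.inter_subset_left
  set r := Metric.infDist y C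
  have hr0 : 0 < r := (Metric.infDist_pos_iff_notMem_closure hCne).1 hy
  have hrle : ∀ z ∈ C, r ^ 2 ≤ dist y z ^ 2 := fun z hz =>
    pow_le_pow_left₀ hr0.le (Metric.infDist_le_dist_of_mem hz) 2
  have hrR : r ^ 2 ≤ R ^ 2 := by
    obtain ⟨z, hzC, hzR⟩ := hne
    rw [Metric.mem_closedBall'] at hzR
    exact (hrle z hzC).trans (pow_le_pow_left₀ dist_nonneg hzR 2)
  have hr2 : 0 < r ^ 2 := by positivity
  have hR2 : 0 < R ^ 2 := hr2.trans_le hrR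
  set t := r ^ 2 / (24 * R ^ 2) with ht
  have ht0 : 0 < t := by positivity
  have htR : t * (24 * R ^ 2) = r ^ 2 := div_mul_cancel₀ _ (by positivity)
  have ht1 : t ≤ 1 / 24 := by
    rw [ht, div_le_div_iff₀ (by positivity) (by norm_num)]
    linarith
  obtain ⟨p, hpC, hp⟩ : ∃ p ∈ C, dist y p < Real.sqrt (r ^ 2 + t * (r ^ 2 / 4)) :=
    (Metric.infDist_lt_iff hCne).1 (Real.lt_sqrt_of_sq_lt (lt_add_of_pos_right _ (by positivity)))
  have hp2 : dist y p ^ 2 ≤ r ^ 2 + t * (r ^ 2 / 4) :=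
    ((Real.lt_sqrt dist_nonneg).1 hp).le
  refine ⟨p, hpC, r ^ 2 / 2, by positivity, ?_⟩
  rintro z ⟨hzC, hzR⟩
  rw [Metric.mem_closedBall'] at hzR
  have hz2 : dist y z ^ 2 ≤ R ^ 2 := pow_le_pow_left₀ dist_nonneg hzR 2
  obtain ⟨γ, hγ, h0, h1⟩ := hY.1 p z
  have htI : t ∈ Set.Icc (0 : ℝ) 1 := ⟨ht0.le, by linarith⟩
  have hγC : γ t ∈ C := hC γ hγ (h0 ▸ hpC) (h1 ▸ hzC) t htI
  have hcat := hY.2 γ hγ y t htI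
  rw [h0, h1, dist_comm (γ t), dist_comm p y, dist_comm z y] at hcat
  have hmin := hrle _ hγC
  have hpz : dist p z ^ 2 ≤ 6 * R ^ 2 := by
    have htri : dist p z ≤ dist y p + dist y z := dist_triangle_left p z y
    have hsq : dist p z ^ 2 ≤ (dist y p + dist y z) ^ 2 := pow_le_pow_left₀ dist_nonneg htri 2
    nlinarith [sq_nonneg (dist y p - dist y z)]
  have hstep : (1 - t) * dist y p ^ 2 ≤ (1 - t) * r ^ 2 + t * (r ^ 2 / 4) := by
    have := mul_le_mul_of_nonneg_left hp2 (by linarith : (0 : ℝ) ≤ 1 - t)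
    nlinarith [mul_pos ht0 (mul_pos ht0 hr2)]
  have hcancel : t * ((1 - t) * dist p z ^ 2) ≤ t * (dist y z ^ 2 - r ^ 2 + r ^ 2 / 4) := by
    linarith
  have hle := le_of_mul_le_mul_left hcancel ht0
  have htpz : t * dist p z ^ 2 ≤ r ^ 2 / 4 := by
    have := mul_le_mul_of_nonneg_left hpz ht0.le
    linarith
  linarith

/-- A uniform decrease of the squared distances to a bounded sequence decreases the asymptotic
radius strictly. -/
theorem asymptoticRadius_lt_of_dist_sq_add_le {Y : Type*} [MetricSpace Y] {u : ℕ → Y}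
    (hu : IsBounded (Set.range u)) {p y : Y} {δ : ℝ} (hδ : 0 < δ)
    (h : ∀ n, dist p (u n) ^ 2 + δ ≤ dist y (u n) ^ 2) :
    asymptoticRadius u p < asymptoticRadius u y := by
  obtain ⟨R, hR⟩ := hu.subset_closedBall y
  have hbdd : IsBoundedUnder (· ≤ ·) atTop (fun n => dist y (u n) ^ 2) :=
    isBoundedUnder_of ⟨R ^ 2, fun n =>
      pow_le_pow_left₀ dist_nonneg (Metric.mem_closedBall'.1 (hR (Set.mem_range_self n))) 2⟩
  have hev : ∀ᶠ n in atTop, dist y (u n) ^ 2 < asymptoticRadius u y + δ / 2 :=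
    eventually_lt_of_limsup_lt (lt_add_of_pos_right _ (half_pos hδ)) hbdd
  have hle : asymptoticRadius u p ≤ asymptoticRadius u y - δ / 2 := by
    refine limsup_le_of_le
      (IsBoundedUnder.isCoboundedUnder_le (isBoundedUnder_of ⟨0, fun n => sq_nonneg _⟩)) ?_
    filter_upwards [hev] with n hn
    linarith [h n]
  linarith

/-- **Convex lower semicontinuous functionals on a CAT(0) space are sequentially weakly
lower semicontinuous**: if `y_n ⇀ y` then `E(y) ≤ liminf_n E(y_n)`. -/
theorem convex_lsc_weakly_lsc {Y : Type*} [MetricSpace Y] [CompleteSpace Y]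
    (hY : Cat0 Y) (E : Y → EReal) (hbot : ∀ y, E y ≠ ⊥)
    (hconv : LamConvex 0 E) (hlsc : LowerSemicontinuous E)
    (yn : ℕ → Y) (y : Y) (hw : WeakConv yn y) :
    E y ≤ Filter.liminf (fun n => E (yn n)) Filter.atTop := by
  by_contra! hlt
  obtain ⟨c, hc, hcy⟩ := EReal.lt_iff_exists_real_btwn.1 hlt
  obtain ⟨φ, hφ, hφE⟩ :=
    extraction_of_frequently_atTop (frequently_lt_of_liminf_lt (by isBoundedDefault) hc)
  have hmem : ∀ n, (yn ∘ φ) n ∈ {x | E x ≤ (c : EReal)} := fun n => (hφE n).le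
  have hbdd : IsBounded (Set.range (yn ∘ φ)) := hw.1.subset (Set.range_comp_subset_range φ yn)
  have hclosed : IsClosed {x | E x ≤ (c : EReal)} := hlsc.isClosed_preimage (c : EReal)
  have hy : y ∉ closure {x | E x ≤ (c : EReal)} := by
    rw [hclosed.closure_eq]
    exact not_le.2 hcy
  obtain ⟨R, hR⟩ := hbdd.subset_closedBall y
  have hball : ∀ n, (yn ∘ φ) n ∈ {x | E x ≤ (c : EReal)} ∩ Metric.closedBall y R :=
    fun n => ⟨hmem n, hR (Set.mem_range_self n)⟩
  obtain ⟨p, -, δ, hδ, hp⟩ :=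
    hY.exists_dist_sq_add_le (hconv.geodesicConvex_sublevel c) hy R ⟨_, hball 0⟩
  exact (hw.2 φ hφ p).not_gt
    (asymptoticRadius_lt_of_dist_sq_add_le hbdd hδ fun n => hp _ (hball n))
end

section
/- Let Y be a CAT(0) space, E : Y → ℝ ∪ {+∞} a λ-convex and lower semicontinuous functional with D(E) nonempty, λ ∈ ℝ, and let (y_t)_{t>0} be a gradient flow trajectory for E starting from y ∈ Y. Then t ↦ E(y_t) is locally absolutely continuous on (0,∞), for every t > 0 the right metric speed |ẏ_t⁺| := lim_{h↓0} d(y_{t+h}, y_t)/h exists, and for every t > 0 one has lim_{h↓0} (E(y_t) − E(y_{t+h}))/h = |ẏ_t⁺|² = |∂⁻E|²(y_t). -/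
open Filter MeasureTheory Set Bornology
open scoped ENNReal Topology NNReal

section AbsolutelyContinuousCurves

/-- If increments of `f` are dominated by those of an absolutely continuous function, then `f` is
absolutely continuous. -/
lemma AbsolutelyContinuousOnInterval.of_dist_le {X Z : Type*} [PseudoMetricSpace X]
    [PseudoMetricSpace Z] {f : ℝ → X} {g : ℝ → Z} {a b : ℝ}
    (hg : AbsolutelyContinuousOnInterval g a b)
    (h : ∀ s ∈ uIcc a b, ∀ t ∈ uIcc a b, dist (f s) (f t) ≤ dist (g s) (g t)) :
    AbsolutelyContinuousOnInterval f a b := by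
  rw [absolutelyContinuousOnInterval_iff] at hg ⊢
  intro ε hε
  obtain ⟨δ, hδ, H⟩ := hg ε hε
  refine ⟨δ, hδ, fun I hI hlt => lt_of_le_of_lt (Finset.sum_le_sum fun i hi => ?_) (H I hI hlt)⟩
  exact h _ (hI.1 i hi).1 _ (hI.1 i hi).2

variable {Y : Type*} [MetricSpace Y] {y : ℝ → Y} {a b : ℝ}

lemma AbsContOn.absolutelyContinuousOnInterval (hab : a ≤ b) (h : AbsContOn y a b) :
    AbsolutelyContinuousOnInterval y a b := by
  obtain ⟨g, -, hgint, hg⟩ := h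
  have hintegrable : IntervalIntegrable g volume a b :=
    (intervalIntegrable_iff_integrableOn_Icc_of_le hab).2 hgint
  have hsub : ∀ s ∈ Icc a b, ∀ t ∈ Icc a b, IntervalIntegrable g volume s t := by
    intro s hs t ht
    refine hintegrable.mono_set ?_
    rw [uIcc_of_le hab]
    exact uIcc_subset_Icc hs ht
  have hle : ∀ s ∈ Icc a b, ∀ t ∈ Icc a b, s ≤ t →
      dist (y s) (y t) ≤ dist (∫ r in a..s, g r) (∫ r in a..t, g r) := by
    intro s hs t ht hst
    have hadd := intervalIntegral.integral_add_adjacent_intervals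
      (hsub a (left_mem_Icc.2 hab) s hs) (hsub s hs t ht)
    rw [dist_comm (∫ r in a..s, g r), Real.dist_eq, ← hadd, add_sub_cancel_left]
    exact (hg s hs t ht hst).trans (le_abs_self _)
  refine (hintegrable.absolutelyContinuousOnInterval_intervalIntegral left_mem_uIcc).of_dist_le ?_
  rw [uIcc_of_le hab]
  intro s hs t ht
  rcases le_total s t with hst | hst
  · exact hle s hs t ht hst
  · rw [dist_comm, dist_comm (∫ r in a..s, g r)]
    exact hle t ht s hs hst

lemma AbsolutelyContinuousOnInterval.dist_const (h : AbsolutelyContinuousOnInterval y a b)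
    (z : Y) : AbsolutelyContinuousOnInterval (fun r => dist (y r) z) a b :=
  h.of_dist_le fun s _ t _ => by
    rw [Real.dist_eq]; exact abs_dist_sub_le _ _ _

lemma LocAbsCont.continuousAt (h : LocAbsCont y) {t : ℝ} (ht : 0 < t) : ContinuousAt y t := by
  have hab : t / 2 ≤ t + 1 := by linarith
  have hac : AbsContOn y (t / 2) (t + 1) := h _ _ (half_pos ht) hab
  have hcont := ((hac.absolutelyContinuousOnInterval hab).dist_const (y t)).continuousOn
  rw [uIcc_of_le hab] at hcont
  have hlim := hcont.continuousAt (Icc_mem_nhds (half_lt_self ht) (lt_add_one t))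
  rw [ContinuousAt, dist_self] at hlim
  exact tendsto_iff_dist_tendsto_zero.2 hlim

end AbsolutelyContinuousCurves

section Gronwall

/-- `expInc κ δ = ∫ r in 0..δ, exp (κ * r)`, written in closed form for `κ ≠ 0`. -/
noncomputable def expInc (κ δ : ℝ) : ℝ := (Real.exp (κ * δ) - 1) / κ

lemma expInc_nonneg {κ δ : ℝ} (hκ : 0 < κ) (hδ : 0 ≤ δ) : 0 ≤ expInc κ δ :=
  div_nonneg (by linarith [Real.one_le_exp (mul_nonneg hκ.le hδ)]) hκ.le

lemma self_le_expInc {κ : ℝ} (hκ : 0 < κ) (δ : ℝ) : δ ≤ expInc κ δ := by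
  rw [expInc, le_div_iff₀ hκ]
  linarith [Real.add_one_le_exp (κ * δ)]

lemma expInc_pos {κ δ : ℝ} (hκ : 0 < κ) (hδ : 0 < δ) : 0 < expInc κ δ :=
  hδ.trans_le (self_le_expInc hκ δ)

lemma expInc_le {κ δ T : ℝ} (hκ : 0 < κ) (hδ : 0 ≤ δ) (hT : δ ≤ T) :
    expInc κ δ ≤ δ * Real.exp (κ * T) := by
  have h1 : expInc κ δ ≤ δ * Real.exp (κ * δ) := by
    rw [expInc, div_le_iff₀ hκ]
    have h := Real.add_one_le_exp (-(κ * δ))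
    have h2 : Real.exp (-(κ * δ)) * Real.exp (κ * δ) = 1 := by
      rw [← Real.exp_add]; simp
    nlinarith [Real.exp_pos (κ * δ)]
  exact h1.trans (by gcongr)

lemma exp_sub_one_eq_mul_expInc {κ : ℝ} (hκ : 0 < κ) (δ : ℝ) :
    Real.exp (κ * δ) = 1 + κ * expInc κ δ := by
  rw [expInc]; field_simp; ring

lemma tendsto_expInc_div {κ c : ℝ} (hκ : 0 < κ) :
    Tendsto (fun h => expInc κ (c * h) / h) (𝓝[>] 0) (𝓝 c) := by
  have hd : HasDerivAt (fun h => expInc κ (c * h)) c 0 := by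
    unfold expInc
    have h1 : HasDerivAt (fun h : ℝ => κ * (c * h)) (κ * (c * 1)) 0 :=
      ((hasDerivAt_id (0 : ℝ)).const_mul c).const_mul κ
    have h2 := (h1.exp.sub_const 1).div_const κ
    have hc : Real.exp (κ * (c * 0)) * (κ * (c * 1)) / κ = c := by
      simp [hκ.ne']
    rwa [hc] at h2
  have := hd.tendsto_slope_zero_right
  refine this.congr fun h => ?_
  simp [expInc, div_eq_inv_mul]

/-- Grönwall's inequality for absolutely continuous functions whose derivative satisfies the
differential inequality almost everywhere. -/
lemma AbsolutelyContinuousOnInterval.le_gronwall {w : ℝ → ℝ} {a b κ c : ℝ} (hκ : 0 < κ)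
    (hab : a ≤ b) (hw : AbsolutelyContinuousOnInterval w a b)
    (hd : ∀ᵐ r, r ∈ Ioo a b → ∀ w', HasDerivAt w w' r → w' ≤ κ * w r + c) :
    w b ≤ Real.exp (κ * (b - a)) * w a + c * expInc κ (b - a) := by
  have hexp : AbsolutelyContinuousOnInterval (fun r => Real.exp (-κ * r)) a b :=
    ContDiffOn.absolutelyContinuousOnInterval (by fun_prop)
  have hconst : AbsolutelyContinuousOnInterval (fun _ : ℝ => c / κ) a b :=
    ContDiffOn.absolutelyContinuousOnInterval (by fun_prop)
  have hprod := hexp.mul (hw.add hconst)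
  have hintegrable := hprod.integral_deriv_eq_sub
  have hneg : ∫ r in a..b, deriv ((fun r => Real.exp (-κ * r)) * (w + fun _ => c / κ)) r ≤ 0 := by
    rw [intervalIntegral.integral_of_le hab, integral_Ioc_eq_integral_Ioo]
    refine setIntegral_nonpos_ae measurableSet_Ioo ?_
    filter_upwards [hd, hw.ae_differentiableAt] with r hr hr' hrI
    have hwd := (hr' (by rw [uIcc_of_le hab]; exact Ioo_subset_Icc_self hrI)).hasDerivAt
    have hle := hr hrI _ hwd
    have he : HasDerivAt (fun r => Real.exp (-κ * r)) (Real.exp (-κ * r) * (-κ * 1)) r :=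
      ((hasDerivAt_id r).const_mul (-κ)).exp
    rw [(he.mul (hwd.add (hasDerivAt_const r (c / κ)))).deriv]
    have hck : κ * (c / κ) = c := by field_simp
    have : Real.exp (-κ * r) * (deriv w r - κ * w r - κ * (c / κ)) ≤ 0 :=
      mul_nonpos_of_nonneg_of_nonpos (Real.exp_pos _).le (by rw [hck]; linarith)
    simp only [Pi.add_apply]
    linarith
  rw [hintegrable] at hneg
  simp only [Pi.mul_apply, Pi.add_apply, sub_nonpos] at hneg
  have e1 : Real.exp (κ * (b - a)) * Real.exp (-κ * b) = Real.exp (-κ * a) := by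
    rw [← Real.exp_add]; congr 1; ring
  have e2 : Real.exp (-κ * b) * Real.exp (κ * b) = 1 := by
    rw [← Real.exp_add]; simp
  have h3 : w b + c / κ ≤ Real.exp (κ * (b - a)) * (w a + c / κ) := by
    have := mul_le_mul_of_nonneg_left hneg (Real.exp_pos (κ * b)).le
    have e3 : Real.exp (κ * b) * Real.exp (-κ * a) = Real.exp (κ * (b - a)) := by
      rw [← Real.exp_add]; congr 1; ring
    rw [← mul_assoc, ← mul_assoc, e3, mul_comm (Real.exp (κ * b)), e2, one_mul] at this
    exact this
  have e4 : c * expInc κ (b - a) = Real.exp (κ * (b - a)) * (c / κ) - c / κ := by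
    rw [expInc]; field_simp
  rw [e4]; linarith

end Gronwall

/-- A locally absolutely continuous curve satisfying the Evolution Variational Inequality with
parameter `-κ < 0` for a proper lower semicontinuous functional. -/
structure EVICurve {Y : Type*} [MetricSpace Y] (κ : ℝ) (E : Y → EReal) (y : ℝ → Y) : Prop where
  pos : 0 < κ
  ne_bot : ∀ z, E z ≠ ⊥
  lsc : LowerSemicontinuous E
  exists_ne_top : ∃ z, E z ≠ ⊤
  absCont : LocAbsCont y
  evi : EVI (-κ) E y

lemma EVI.mono {Y : Type*} [MetricSpace Y] {lam lam' : ℝ} {E : Y → EReal} {y : ℝ → Y}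
    (h : EVI lam E y) (hle : lam' ≤ lam) : EVI lam' E y := by
  intro z
  filter_upwards [h z] with t ⟨d', hd', ht⟩
  refine ⟨d', hd', le_trans ?_ ht⟩
  gcongr

namespace EVICurve

variable {Y : Type*} [MetricSpace Y] {κ : ℝ} {E : Y → EReal} {y : ℝ → Y}

lemma ae_deriv_le (H : EVICurve κ E y) {z : Y} (hz : E z ≠ ⊤) :
    ∀ᵐ t, 0 < t → E (y t) ≠ ⊤ ∧ ∀ d', HasDerivAt (fun s => dist (y s) z ^ 2 / 2) d' t →
      d' ≤ κ * (dist (y t) z ^ 2 / 2) + ((E z).toReal - (E (y t)).toReal) := by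
  have h := H.evi z
  rw [ae_restrict_iff' measurableSet_Ioi] at h
  filter_upwards [h] with t ht hpos
  obtain ⟨d', hd', hle⟩ := ht hpos
  have hne : E (y t) ≠ ⊤ := by
    intro htop
    rw [htop, EReal.coe_add_top, EReal.top_add_coe] at hle
    exact hz (top_le_iff.1 hle)
  refine ⟨hne, fun d'' hd'' => ?_⟩
  rw [hd''.unique hd']
  lift E (y t) to ℝ using ⟨hne, H.ne_bot _⟩ with e he
  lift E z to ℝ using ⟨hz, H.ne_bot _⟩ with e' he'
  norm_cast at hle
  simp only [EReal.toReal_coe]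
  linarith

lemma absolutelyContinuousOnInterval_dist (H : EVICurve κ E y) {a b : ℝ} (ha : 0 < a)
    (hab : a ≤ b) (z : Y) : AbsolutelyContinuousOnInterval (fun r => dist (y r) z) a b :=
  ((H.absCont a b ha hab).absolutelyContinuousOnInterval hab).dist_const z

lemma absolutelyContinuousOnInterval_dist_sq (H : EVICurve κ E y) {a b : ℝ} (ha : 0 < a)
    (hab : a ≤ b) (z : Y) :
    AbsolutelyContinuousOnInterval (fun r => dist (y r) z ^ 2 / 2) a b := by
  have h := H.absolutelyContinuousOnInterval_dist ha hab z
  convert (h.mul h).const_mul (1 / 2) using 2 with r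
  simp only [Pi.mul_apply]
  ring

lemma lowerSemicontinuousAt_comp (H : EVICurve κ E y) {t : ℝ} (ht : 0 < t) {c : EReal}
    (hc : c < E (y t)) : ∀ᶠ r in 𝓝 t, c < E (y r) :=
  (H.absCont.continuousAt ht).eventually (H.lsc (y t) c hc)

/-- The energy is nonincreasing along the curve. -/
lemma antitone (H : EVICurve κ E y) {s t : ℝ} (hs : 0 < s) (hst : s ≤ t) :
    E (y t) ≤ E (y s) := by
  by_contra! hlt
  obtain ⟨c, hsc, hct⟩ := exists_between hlt
  set S : Set ℝ := {r | r ∈ Icc s t ∧ E (y r) ≤ c} with hS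
  have hclosed : IsClosed S := by
    rw [← isOpen_compl_iff, isOpen_iff_mem_nhds]
    intro r hr
    by_cases hrI : r ∈ Icc s t
    · have hcr : c < E (y r) := by
        by_contra! h
        exact hr ⟨hrI, h⟩
      filter_upwards [H.lowerSemicontinuousAt_comp (hs.trans_le hrI.1) hcr] with u hu huS
      exact absurd huS.2 (not_le.2 hu)
    · filter_upwards [isClosed_Icc.isOpen_compl.mem_nhds hrI] with u hu huS
      exact hu huS.1
  have hne : S.Nonempty := ⟨s, ⟨le_rfl, hst⟩, hsc.le⟩
  have hbdd : BddAbove S := ⟨t, fun r hr => hr.1.2⟩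
  obtain ⟨⟨hsa, hat⟩, hac⟩ := hclosed.csSup_mem hne hbdd
  set a := sSup S
  have ha : 0 < a := hs.trans_le hsa
  have hza : E (y a) ≠ ⊤ := (hac.trans_lt (hct.trans_le le_top)).ne
  have hgr := (H.absolutelyContinuousOnInterval_dist_sq ha hat (y a)).le_gronwall (c := 0)
    H.pos hat (by
      filter_upwards [H.ae_deriv_le hza] with r hr hrI w' hw'
      obtain ⟨hrt, hle⟩ := hr (ha.trans hrI.1)
      have hlt : E (y a) ≤ E (y r) := by
        refine hac.trans (le_of_not_ge fun h => ?_)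
        exact absurd (le_csSup hbdd ⟨⟨hsa.trans hrI.1.le, hrI.2.le⟩, h⟩) (not_le.2 hrI.1)
      have := EReal.toReal_le_toReal hlt (H.ne_bot _) hrt
      linarith [hle w' hw'])
  simp only [dist_self] at hgr
  have hzero : dist (y t) (y a) = 0 := by
    have : dist (y t) (y a) ^ 2 ≤ 0 := by linarith
    exact pow_eq_zero_iff two_ne_zero |>.1 (le_antisymm this (sq_nonneg _))
  rw [dist_eq_zero.1 hzero] at hct
  exact absurd hac (not_le.2 hct)

lemma energy_ne_top (H : EVICurve κ E y) {t : ℝ} (ht : 0 < t) : E (y t) ≠ ⊤ := by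
  obtain ⟨z, hz⟩ := H.exists_ne_top
  intro htop
  have hpos : volume (Ioo 0 t) ≠ 0 := by simpa using ht
  apply hpos
  refine measure_mono_null ?_ (ae_iff.1 (H.ae_deriv_le hz))
  intro r hr hr'
  exact (hr' hr.1).1 (top_le_iff.1 (htop ▸ H.antitone hr.1 hr.2.le))

lemma toReal_antitone (H : EVICurve κ E y) {s t : ℝ} (hs : 0 < s) (hst : s ≤ t) :
    (E (y t)).toReal ≤ (E (y s)).toReal :=
  EReal.toReal_le_toReal (H.antitone hs hst) (H.ne_bot _) (H.energy_ne_top hs)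

/-- The integrated form of the Evolution Variational Inequality. -/
lemma dist_sq_le (H : EVICurve κ E y) {z : Y} (hz : E z ≠ ⊤) {s δ : ℝ} (hs : 0 < s)
    (hδ : 0 ≤ δ) :
    dist (y (s + δ)) z ^ 2 / 2 ≤ Real.exp (κ * δ) * (dist (y s) z ^ 2 / 2)
      + ((E z).toReal - (E (y (s + δ))).toReal) * expInc κ δ := by
  have hle : s ≤ s + δ := by linarith
  have hgr := (H.absolutelyContinuousOnInterval_dist_sq hs hle z).le_gronwall
    (c := (E z).toReal - (E (y (s + δ))).toReal) H.pos hle (by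
      filter_upwards [H.ae_deriv_le hz] with r hr hrI w' hw'
      have hr0 := hs.trans hrI.1
      linarith [(hr hr0).2 w' hw', H.toReal_antitone hr0 hrI.2.le])
  rwa [add_sub_cancel_left] at hgr

lemma dist_sq_step (H : EVICurve κ E y) {t h δ : ℝ} (ht : 0 < t) (hh : 0 ≤ h) (hδ : 0 ≤ δ) :
    dist (y (t + δ)) (y (t + δ + h)) ^ 2 / 2 ≤
      Real.exp (2 * (κ * δ)) * (dist (y t) (y (t + h)) ^ 2 / 2)
        + expInc κ δ * ((E (y t)).toReal - (E (y (t + δ))).toReal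
          + κ * expInc κ δ * ((E (y t)).toReal - (E (y (t + δ + h))).toReal)) := by
  have h1 := H.dist_sq_le (H.energy_ne_top (t := t + δ + h) (by positivity)) ht hδ
  have h2 := H.dist_sq_le (H.energy_ne_top ht) (s := t + h) (by positivity) hδ
  rw [show t + h + δ = t + δ + h by ring, dist_comm (y (t + δ + h)),
    dist_comm (y (t + h))] at h2
  have hexp := exp_sub_one_eq_mul_expInc H.pos δ
  have h3 := mul_le_mul_of_nonneg_left h2 (Real.exp_pos (κ * δ)).le
  rw [two_mul, Real.exp_add]
  refine h1.trans ((add_le_add_left h3 _).trans (le_of_eq ?_))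
  rw [hexp]
  ring

/-- Two time shifts of the curve separate at most exponentially. -/
lemma dist_shift_le (H : EVICurve κ E y) {t h k : ℝ} (ht : 0 < t) (hh : 0 ≤ h) (hk : 0 ≤ k) :
    dist (y (t + k)) (y (t + k + h)) ≤ Real.exp (κ * k) * dist (y t) (y (t + h)) := by
  set f : ℝ → ℝ := fun r => (E (y r)).toReal with hf
  set M : ℝ := f t - f (t + k + h) with hM
  have hM0 : 0 ≤ M := sub_nonneg.2 (H.toReal_antitone ht (by linarith))
  have hκ := H.pos
  have key : ∀ δ : ℝ, 0 ≤ δ → ∀ n : ℕ, n * δ ≤ k →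
      dist (y (t + n * δ)) (y (t + n * δ + h)) ^ 2 / 2 ≤
        Real.exp (2 * (κ * (n * δ))) * (dist (y t) (y (t + h)) ^ 2 / 2
          + expInc κ δ * (f t - f (t + n * δ) + n * (κ * expInc κ δ * M))) := by
    intro δ hδ n
    have hq := expInc_nonneg hκ hδ
    induction n with
    | zero => intro _; simp
    | succ n ih =>
      intro hn
      push_cast at hn ⊢
      have hnδ : 0 ≤ n * δ := by positivity
      have htn : 0 < t + n * δ := by positivity
      have hstep := H.dist_sq_step htn hh hδ
      have ih' := ih (by linarith)
      rw [show t + n * δ + δ = t + (n + 1) * δ by ring] at hstep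
      have hfn : f (t + (n + 1) * δ) ≤ f (t + n * δ) := H.toReal_antitone htn (by linarith)
      have hfM : f (t + n * δ) - f (t + (n + 1) * δ + h) ≤ M := by
        have h1 : f (t + n * δ) ≤ f t := H.toReal_antitone ht (by linarith)
        have h2 : f (t + k + h) ≤ f (t + (n + 1) * δ + h) :=
          H.toReal_antitone (by positivity) (by linarith)
        linarith
      set A := Real.exp (2 * (κ * ((n + 1) * δ)))
      have hA : Real.exp (2 * (κ * δ)) * Real.exp (2 * (κ * (n * δ))) = A := by
        rw [← Real.exp_add]; congr 1; ring
      have hA1 : 1 ≤ A := Real.one_le_exp (by positivity)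
      set R := expInc κ δ * (f (t + n * δ) - f (t + (n + 1) * δ) + κ * expInc κ δ * M)
      have hR : 0 ≤ R := by
        have : 0 ≤ f (t + n * δ) - f (t + (n + 1) * δ) := by linarith
        positivity
      have hrem : expInc κ δ * (f (t + n * δ) - f (t + (n + 1) * δ)
          + κ * expInc κ δ * (f (t + n * δ) - f (t + (n + 1) * δ + h))) ≤ A * R := by
        refine le_trans ?_ (le_mul_of_one_le_left hR hA1)
        simp only [R]
        gcongr
      have hmain := mul_le_mul_of_nonneg_left ih' (Real.exp_pos (2 * (κ * δ))).le
      rw [← mul_assoc (Real.exp _) (Real.exp _), hA] at hmain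
      refine hstep.trans ((add_le_add hmain hrem).trans (le_of_eq ?_))
      simp only [R]
      ring
  have hlim : dist (y (t + k)) (y (t + k + h)) ^ 2 / 2 ≤
      Real.exp (2 * (κ * k)) * (dist (y t) (y (t + h)) ^ 2 / 2) := by
    set C := Real.exp (κ * k) with hC
    have hseq : ∀ n : ℕ, dist (y (t + k)) (y (t + k + h)) ^ 2 / 2 ≤
        Real.exp (2 * (κ * k)) * (dist (y t) (y (t + h)) ^ 2 / 2
          + (k * C * M + k ^ 2 * C ^ 2 * κ * M) * (1 / ((n : ℝ) + 1))) := by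
      intro n
      have hn : (0 : ℝ) < (n : ℝ) + 1 := by positivity
      have hδ : 0 ≤ k / ((n : ℝ) + 1) := by positivity
      have hmul : ((n + 1 : ℕ) : ℝ) * (k / ((n : ℝ) + 1)) = k := by
        push_cast; field_simp
      have h1 := key _ hδ (n + 1) hmul.le
      rw [hmul] at h1
      refine h1.trans (mul_le_mul_of_nonneg_left (add_le_add_right ?_ _) (Real.exp_pos _).le)
      have hqle : expInc κ (k / ((n : ℝ) + 1)) ≤ k / ((n : ℝ) + 1) * C :=
        expInc_le hκ hδ (div_le_self hk (by linarith [(Nat.cast_nonneg n : (0 : ℝ) ≤ n)]))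
      have hq := expInc_nonneg hκ hδ
      set q := expInc κ (k / ((n : ℝ) + 1))
      have hfM : f t - f (t + k) ≤ M := by
        have : f (t + k + h) ≤ f (t + k) := H.toReal_antitone (by positivity) (by linarith)
        linarith
      push_cast
      calc q * (f t - f (t + k) + ((n : ℝ) + 1) * (κ * q * M))
          ≤ q * (M + ((n : ℝ) + 1) * (κ * q * M)) := by gcongr
        _ ≤ (k / ((n : ℝ) + 1) * C) *
              (M + ((n : ℝ) + 1) * (κ * (k / ((n : ℝ) + 1) * C) * M)) := by gcongr
        _ = _ := by field_simp
    refine ge_of_tendsto' (x := atTop) ?_ hseq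
    have h0 := tendsto_one_div_add_atTop_nhds_zero_nat (𝕜 := ℝ)
    have := ((h0.const_mul (k * C * M + k ^ 2 * C ^ 2 * κ * M)).const_add
      (dist (y t) (y (t + h)) ^ 2 / 2)).const_mul (Real.exp (2 * (κ * k)))
    simpa using this
  refine le_of_sq_le_sq ?_ (by positivity)
  rw [mul_pow, ← Real.exp_nat_mul]
  push_cast
  linarith

/-- The curve is locally Lipschitz, uniformly for base points in a compact interval. -/
lemma exists_lipschitz (H : EVICurve κ E y) {a : ℝ} (ha : 0 < a) (b : ℝ) :
    ∃ C, 0 ≤ C ∧ ∀ s ∈ Icc a b, ∀ h ∈ Ioc 0 (a / 4), dist (y s) (y (s + h)) ≤ C * h := by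
  have hκ := H.pos
  obtain ⟨g, hg0, hgint, hg⟩ := H.absCont (a / 2) a (by positivity) (by linarith)
  have hintegrable : ∀ s ∈ Icc (a / 2) a, ∀ t ∈ Icc (a / 2) a, IntervalIntegrable g volume s t := by
    intro s hs t ht
    refine IntervalIntegrable.mono_set (a := a / 2) (b := a)
      ((intervalIntegrable_iff_integrableOn_Icc_of_le (by linarith)).2 hgint) ?_
    rw [uIcc_of_le (by linarith : a / 2 ≤ a)]
    exact uIcc_subset_Icc hs ht
  set G := ∫ r in (a / 2)..a, g r
  have hG : 0 ≤ G := intervalIntegral.integral_nonneg (by linarith) fun r _ => hg0 r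
  refine ⟨Real.exp (κ * b) * G * 8 / a, by positivity, fun s hs h hh => ?_⟩
  obtain ⟨hh0, hh4⟩ := hh
  set N := ⌊a / 4 / h⌋₊
  have hNle : N * h ≤ a / 4 := by
    have : (N : ℝ) ≤ a / 4 / h := Nat.floor_le (by positivity)
    rwa [le_div_iff₀ hh0] at this
  have hN1 : (1 : ℝ) ≤ N := by
    exact_mod_cast Nat.le_floor (by rw [Nat.cast_one, le_div_iff₀ hh0]; linarith)
  have hNge : a / 8 ≤ N * h := by
    have : a / 4 / h < N + 1 := Nat.lt_floor_add_one _
    rw [div_lt_iff₀ hh0] at this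
    nlinarith
  have hsum : ∀ n : ℕ, n ≤ N → n * dist (y s) (y (s + h)) ≤
      Real.exp (κ * b) * ∫ r in (a / 2)..(a / 2 + n * h), g r := by
    intro n
    induction n with
    | zero => intro _; simp
    | succ n ih =>
      intro hn
      have ih' := ih (by omega)
      have hnh : ((n + 1 : ℕ) : ℝ) * h ≤ N * h := by gcongr
      push_cast at hnh ⊢
      have hn0 : 0 ≤ n * h := by positivity
      have hm1 : a / 2 + n * h ∈ Icc (a / 2) a := ⟨by linarith, by linarith⟩
      have hm2 : a / 2 + (n + 1) * h ∈ Icc (a / 2) a := ⟨by linarith, by linarith⟩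
      have hadd := intervalIntegral.integral_add_adjacent_intervals
        (hintegrable _ ⟨le_rfl, by linarith⟩ _ hm1) (hintegrable _ hm1 _ hm2)
      have hshift := H.dist_shift_le (t := a / 2 + n * h) (h := h) (k := s - (a / 2 + n * h))
        (by positivity) hh0.le (by linarith [hs.1])
      rw [add_sub_cancel] at hshift
      have hgle := hg _ hm1 _ hm2 (by linarith)
      rw [show a / 2 + (n + 1) * h = a / 2 + n * h + h by ring] at hgle hadd ⊢
      have hexp : Real.exp (κ * (s - (a / 2 + n * h))) ≤ Real.exp (κ * b) := by
        gcongr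
        linarith [hs.2]
      have hone := hshift.trans (mul_le_mul hexp hgle dist_nonneg (Real.exp_pos _).le)
      rw [← hadd]
      linarith
  have hfin := hsum N le_rfl
  have hmono : ∫ r in (a / 2)..(a / 2 + N * h), g r ≤ G := by
    have hm : a / 2 + N * h ∈ Icc (a / 2) a := ⟨by linarith, by linarith⟩
    have hadd := intervalIntegral.integral_add_adjacent_intervals
      (hintegrable _ ⟨le_rfl, by linarith⟩ _ hm) (hintegrable _ hm a ⟨by linarith, le_rfl⟩)
    have : 0 ≤ ∫ r in (a / 2 + N * h)..a, g r :=
      intervalIntegral.integral_nonneg hm.2 fun r _ => hg0 r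
    linarith
  have hfin' := hfin.trans (mul_le_mul_of_nonneg_left hmono (Real.exp_pos (κ * b)).le)
  have h3 := mul_le_mul_of_nonneg_right hfin' hh0.le
  have h4 := mul_le_mul_of_nonneg_right hNge (dist_nonneg (x := y s) (y := y (s + h)))
  rw [div_mul_eq_mul_div, le_div_iff₀ ha]
  linarith

/-- A bound on the lower right speed at time `t` gives a global bound on the energy drop. -/
lemma energy_sub_le_of_frequently (H : EVICurve κ E y) {t L : ℝ} (ht : 0 < t)
    (hL : ∃ᶠ h in 𝓝[>] (0 : ℝ), dist (y t) (y (t + h)) ≤ L * expInc κ h) {z : Y}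
    (hz : E z ≠ ⊤) :
    (E (y t)).toReal - (E z).toReal ≤ L * dist (y t) z + κ / 2 * dist (y t) z ^ 2 := by
  by_contra! hlt
  set c := (E z).toReal + (L * dist (y t) z + κ / 2 * dist (y t) z ^ 2) with hc
  have hcE : (c : EReal) < E (y t) := by
    rw [← EReal.coe_toReal (H.energy_ne_top ht) (H.ne_bot _), EReal.coe_lt_coe_iff]
    linarith
  have hshift : Tendsto (fun h => t + h) (𝓝[>] (0 : ℝ)) (𝓝 t) := by
    have : Tendsto (fun h => t + h) (𝓝 (0 : ℝ)) (𝓝 (t + 0)) :=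
      (continuous_const.add continuous_id).tendsto 0
    rw [add_zero] at this
    exact this.mono_left nhdsWithin_le_nhds
  have hev := hshift.eventually (H.lowerSemicontinuousAt_comp ht hcE)
  obtain ⟨h, hLh, hch, hh0⟩ := (hL.and_eventually (hev.and self_mem_nhdsWithin)).exists
  have hh0 : 0 < h := hh0
  rw [← EReal.coe_toReal (H.energy_ne_top (t := t + h) (by positivity)) (H.ne_bot _),
    EReal.coe_lt_coe_iff] at hch
  have hq := expInc_pos H.pos hh0
  have hd := H.dist_sq_le hz ht hh0.le
  rw [exp_sub_one_eq_mul_expInc H.pos] at hd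
  set D := dist (y t) z
  set D' := dist (y (t + h)) z
  set δ := dist (y t) (y (t + h))
  have hD : 0 ≤ D := dist_nonneg
  have hD' : 0 ≤ D' := dist_nonneg
  have htri : D ≤ δ + D' := dist_triangle _ _ _
  have hlow : D ^ 2 / 2 - D * δ ≤ D' ^ 2 / 2 := by
    nlinarith [sq_nonneg (D - D')]
  have hDδ : D * δ ≤ D * (L * expInc κ h) := mul_le_mul_of_nonneg_left hLh hD
  have hfin : ((E (y (t + h))).toReal - c) * expInc κ h ≤ 0 := by
    rw [hc]
    linarith
  nlinarith

/-- If the energy drop from `y t` is controlled with slope `L`, then the displacement from `y t`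
is controlled with speed `L`. -/
lemma dist_le_of_energy_sub_le (H : EVICurve κ E y) {t L : ℝ} (ht : 0 < t) (hL : 0 ≤ L)
    (hE : ∀ z, E z ≠ ⊤ →
      (E (y t)).toReal - (E z).toReal ≤ L * dist (y t) z + κ / 2 * dist (y t) z ^ 2)
    {h : ℝ} (hh : 0 ≤ h) : dist (y t) (y (t + h)) ≤ L * expInc κ h := by
  have hle : t ≤ t + h := by linarith
  have hgr := (H.absolutelyContinuousOnInterval_dist ht hle (y t)).le_gronwall (c := L) H.pos hle
      (by
    filter_upwards [H.ae_deriv_le (H.energy_ne_top ht)] with r hr hrI w' hw'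
    have hr0 := ht.trans hrI.1
    obtain ⟨hrt, hder⟩ := hr hr0
    rcases (dist_nonneg (x := y r) (y := y t)).eq_or_lt with hzero | hpos
    · have hmin : IsLocalMin (fun s => dist (y s) (y t)) r := by
        refine Filter.Eventually.of_forall fun s => ?_
        simp only [← hzero]
        exact dist_nonneg
      rw [hmin.hasDerivAt_eq_zero hw', ← hzero]
      linarith
    · have hsq := hder _ ((hw'.pow 2).div_const 2)
      have hslope := hE (y r) hrt
      rw [dist_comm (y t)] at hslope
      simp only [Nat.cast_ofNat, Nat.add_one_sub_one, pow_one] at hsq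
      refine le_of_mul_le_mul_left ?_ hpos
      linarith)
  rw [dist_self, add_sub_cancel_left, mul_zero, zero_add, dist_comm] at hgr
  exact hgr

lemma dist_le_of_frequently (H : EVICurve κ E y) {t L : ℝ} (ht : 0 < t) (hL : 0 ≤ L)
    (hfr : ∃ᶠ h in 𝓝[>] (0 : ℝ), dist (y t) (y (t + h)) ≤ L * expInc κ h) {h : ℝ}
    (hh : 0 ≤ h) : dist (y t) (y (t + h)) ≤ L * expInc κ h :=
  H.dist_le_of_energy_sub_le ht hL (fun _ hz => H.energy_sub_le_of_frequently ht hfr hz) hh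

lemma exists_frequently_dist_le (H : EVICurve κ E y) {a : ℝ} (ha : 0 < a) (b : ℝ) :
    ∃ C, 0 ≤ C ∧ ∀ s ∈ Icc a b,
      ∃ᶠ h in 𝓝[>] (0 : ℝ), dist (y s) (y (s + h)) ≤ C * expInc κ h := by
  obtain ⟨C, hC, hlip⟩ := H.exists_lipschitz ha b
  refine ⟨C, hC, fun s hs => Eventually.frequently ?_⟩
  filter_upwards [Ioc_mem_nhdsGT (by positivity : (0 : ℝ) < a / 4)] with h hh
  exact (hlip s hs h hh).trans (mul_le_mul_of_nonneg_left (self_le_expInc H.pos h) hC)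

lemma absContOn_energy (H : EVICurve κ E y) {a b : ℝ} (ha : 0 < a) :
    AbsContOn (fun t => (E (y t)).toReal) a b := by
  obtain ⟨C, hC, hfr⟩ := H.exists_frequently_dist_le ha b
  have hκ := H.pos
  set B := C * Real.exp (κ * (b - a))
  have hB : 0 ≤ B := by positivity
  refine ⟨fun _ => |C * B + κ / 2 * (B * (B * (b - a)))|, fun _ => abs_nonneg _,
    integrableOn_const (by simp), fun s hs t ht hst => ?_⟩
  have hs0 : 0 < s := ha.trans_le hs.1
  rw [intervalIntegral.integral_const, smul_eq_mul, Real.dist_eq,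
    abs_of_nonneg (sub_nonneg.2 (H.toReal_antitone hs0 hst))]
  have hdist : dist (y s) (y t) ≤ B * (t - s) := by
    have h1 := H.dist_le_of_frequently hs0 hC (hfr s hs) (sub_nonneg.2 hst)
    rw [add_sub_cancel] at h1
    have h2 := expInc_le hκ (sub_nonneg.2 hst) (by linarith [hs.1, ht.2] : t - s ≤ b - a)
    calc dist (y s) (y t) ≤ C * expInc κ (t - s) := h1
      _ ≤ C * ((t - s) * Real.exp (κ * (b - a))) := by gcongr
      _ = B * (t - s) := by simp only [B]; ring
  have hdrop := H.energy_sub_le_of_frequently hs0 (hfr s hs)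
    (H.energy_ne_top (hs0.trans_le hst))
  have hts : 0 ≤ t - s := sub_nonneg.2 hst
  calc (E (y s)).toReal - (E (y t)).toReal
      ≤ C * dist (y s) (y t) + κ / 2 * dist (y s) (y t) ^ 2 := hdrop
    _ ≤ C * (B * (t - s)) + κ / 2 * (B * (t - s)) ^ 2 := by gcongr
    _ = (t - s) * (C * B + κ / 2 * (B * (B * (t - s)))) := by ring
    _ ≤ (t - s) * (C * B + κ / 2 * (B * (B * (b - a)))) := by
        have : t - s ≤ b - a := by linarith [hs.1, ht.2]
        gcongr
    _ ≤ (t - s) * |C * B + κ / 2 * (B * (B * (b - a)))| := by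
        gcongr
        exact le_abs_self _

/-- The right metric speed exists and controls all displacements from `y t`. -/
lemma exists_rightSpeed (H : EVICurve κ E y) {t : ℝ} (ht : 0 < t) :
    ∃ v, 0 ≤ v ∧ Tendsto (fun h => dist (y t) (y (t + h)) / h) (𝓝[>] 0) (𝓝 v) ∧
      ∀ h, 0 ≤ h → dist (y t) (y (t + h)) ≤ v * expInc κ h := by
  set S : Set ℝ := {L | 0 ≤ L ∧ ∀ h, 0 ≤ h → dist (y t) (y (t + h)) ≤ L * expInc κ h}
  have hmem : ∀ L, 0 ≤ L →
      (∃ᶠ h in 𝓝[>] (0 : ℝ), dist (y t) (y (t + h)) ≤ L * expInc κ h) → L ∈ S :=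
    fun L hL hfr => ⟨hL, fun h hh => H.dist_le_of_frequently ht hL hfr hh⟩
  have hne : S.Nonempty := by
    obtain ⟨C, hC, hfr⟩ := H.exists_frequently_dist_le ht t
    exact ⟨C, hmem C hC (hfr t ⟨le_rfl, le_rfl⟩)⟩
  have hbdd : BddBelow S := ⟨0, fun L hL => hL.1⟩
  have hv0 : 0 ≤ sInf S := le_csInf hne fun L hL => hL.1
  have hpos : ∀ h, 0 < h → dist (y t) (y (t + h)) / expInc κ h ≤ sInf S := fun h hh =>
    le_csInf hne fun L hL => (div_le_iff₀ (expInc_pos H.pos hh)).2 (hL.2 h hh.le)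
  refine ⟨sInf S, hv0, ?_, fun h hh => ?_⟩
  · have hlim : Tendsto (fun h => dist (y t) (y (t + h)) / expInc κ h) (𝓝[>] 0)
        (𝓝 (sInf S)) := by
      refine tendsto_order.2 ⟨fun l hl => ?_, fun u hu => ?_⟩
      · rcases lt_or_ge l 0 with hl0 | hl0
        · filter_upwards [self_mem_nhdsWithin] with h hh
          exact hl0.trans_le (div_nonneg dist_nonneg (expInc_pos H.pos hh).le)
        · by_contra hcon
          refine absurd (csInf_le hbdd (hmem l hl0 ?_)) (not_le.2 hl)
          refine ((not_eventually.1 hcon).and_eventually self_mem_nhdsWithin).mono ?_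
          rintro h ⟨hle, hh⟩
          exact (div_le_iff₀ (expInc_pos H.pos hh)).1 (not_lt.1 hle)
      · filter_upwards [self_mem_nhdsWithin] with h hh
        exact (hpos h hh).trans_lt hu
    have hq := tendsto_expInc_div (c := 1) H.pos
    have hmul := hlim.mul hq
    rw [mul_one] at hmul
    refine hmul.congr' ?_
    filter_upwards [self_mem_nhdsWithin] with h hh
    have := (expInc_pos H.pos hh).ne'
    rw [one_mul]
    field_simp
  · rcases hh.eq_or_lt with rfl | hh
    · simp [expInc]
    · exact (div_le_iff₀ (expInc_pos H.pos hh)).1 (hpos h hh)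

lemma tendsto_energy_sub_div (H : EVICurve κ E y) {t v : ℝ} (ht : 0 < t)
    (hv : Tendsto (fun h => dist (y t) (y (t + h)) / h) (𝓝[>] 0) (𝓝 v))
    (hE : ∀ z, E z ≠ ⊤ →
      (E (y t)).toReal - (E z).toReal ≤ v * dist (y t) z + κ / 2 * dist (y t) z ^ 2) :
    Tendsto (fun h => ((E (y t)).toReal - (E (y (t + h))).toReal) / h) (𝓝[>] 0)
      (𝓝 (v ^ 2)) := by
  have hid : Tendsto (fun h : ℝ => h) (𝓝[>] 0) (𝓝 0) := tendsto_id.mono_left nhdsWithin_le_nhds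
  refine tendsto_order.2 ⟨fun l hl => ?_, fun u hu => ?_⟩
  · obtain ⟨ε, hε, hε1, hεl⟩ : ∃ ε : ℝ, 0 < ε ∧ ε < 1 ∧ l < v ^ 2 * (1 - ε / 2) := by
      have hc : Tendsto (fun ε : ℝ => v ^ 2 * (1 - ε / 2)) (𝓝[>] 0) (𝓝 (v ^ 2)) := by
        have := (tendsto_const_nhds (x := v ^ 2)).mul
          ((tendsto_const_nhds (x := (1 : ℝ))).sub (hid.div_const 2))
        simpa using this
      obtain ⟨ε, hl', hε⟩ := ((hc.eventually_const_lt hl).and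
        (Ioo_mem_nhdsGT (zero_lt_one' ℝ))).exists
      exact ⟨ε, hε.1, hε.2, hl'⟩
    have hscale : Tendsto (fun h : ℝ => (1 - ε) * h) (𝓝[>] 0) (𝓝[>] 0) := by
      refine tendsto_nhdsWithin_iff.2 ⟨by simpa using hid.const_mul (1 - ε), ?_⟩
      filter_upwards [self_mem_nhdsWithin] with h hh
      exact mul_pos (sub_pos.2 hε1) hh
    have hexp : Tendsto (fun h : ℝ => Real.exp (κ * (ε * h))) (𝓝[>] 0) (𝓝 1) := by
      have : Tendsto (fun h : ℝ => Real.exp (κ * (ε * h))) (𝓝 0) (𝓝 (Real.exp (κ * (ε * 0)))) :=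
        Continuous.tendsto (by fun_prop) 0
      simp only [mul_zero, Real.exp_zero] at this
      exact this.mono_left nhdsWithin_le_nhds
    have hlow := (((hv.pow 2).div_const 2).sub (hexp.mul
      ((((hv.comp hscale).pow 2).div_const 2).mul_const ((1 - ε) ^ 2)))).div
        (tendsto_expInc_div (c := ε) H.pos) hε.ne'
    have hval : (v ^ 2 / 2 - 1 * (v ^ 2 / 2 * (1 - ε) ^ 2)) / ε = v ^ 2 * (1 - ε / 2) := by
      field_simp
      ring
    rw [hval] at hlow
    filter_upwards [hlow.eventually_const_lt hεl, self_mem_nhdsWithin] with h hlh hh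
    have hh : 0 < h := hh
    refine hlh.trans_le ?_
    have h1ε : 0 < 1 - ε := by linarith
    have hd := H.dist_sq_le (H.energy_ne_top ht) (s := t + (1 - ε) * h) (δ := ε * h)
      (by positivity) (by positivity)
    rw [show t + (1 - ε) * h + ε * h = t + h by ring, dist_comm _ (y t),
      dist_comm _ (y t)] at hd
    have hq := expInc_pos H.pos (mul_pos hε hh)
    simp only [Function.comp_apply, Pi.div_apply]
    rw [div_le_div_iff₀ (by positivity) hh]
    have hne := hh.ne'
    have hne' := h1ε.ne'
    generalize expInc κ (ε * h) = q at hd ⊢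
    generalize Real.exp (κ * (ε * h)) = A at hd ⊢
    generalize dist (y t) (y (t + (1 - ε) * h)) = δ at hd ⊢
    field_simp
    linarith
  · have hup := (hv.const_mul v).add (((hv.pow 2).mul hid).const_mul (κ / 2))
    rw [mul_zero, mul_zero, add_zero, ← sq] at hup
    filter_upwards [hup.eventually_lt_const hu, self_mem_nhdsWithin] with h hlt hh
    have hh : 0 < h := hh
    refine lt_of_le_of_lt ?_ hlt
    rw [div_le_iff₀ hh]
    refine (hE _ (H.energy_ne_top (by positivity))).trans (le_of_eq ?_)
    field_simp

lemma descendingSlope_eq (H : EVICurve κ E y) {t v : ℝ} (ht : 0 < t) (hv0 : 0 ≤ v)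
    (hv : Tendsto (fun h => dist (y t) (y (t + h)) / h) (𝓝[>] 0) (𝓝 v))
    (hE : ∀ z, E z ≠ ⊤ →
      (E (y t)).toReal - (E z).toReal ≤ v * dist (y t) z + κ / 2 * dist (y t) z ^ 2) :
    descendingSlope E (y t) = ENNReal.ofReal v := by
  have htop := H.energy_ne_top ht
  rw [descendingSlope, if_neg htop]
  have hsub : ∀ z, E z ≠ ⊤ → (E (y t) - E z).toReal = (E (y t)).toReal - (E z).toReal :=
    fun z hz => EReal.toReal_sub htop (H.ne_bot _) hz (H.ne_bot _)
  have hκ := H.pos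
  apply le_antisymm
  · have hlim : Tendsto (fun z => ENNReal.ofReal (v + κ / 2 * dist (y t) z)) (𝓝[≠] y t)
        (𝓝 (ENNReal.ofReal v)) := by
      refine ENNReal.tendsto_ofReal ?_
      have : Tendsto (fun z => v + κ / 2 * dist (y t) z) (𝓝 (y t))
          (𝓝 (v + κ / 2 * dist (y t) (y t))) := Continuous.tendsto (by fun_prop) _
      rw [dist_self, mul_zero, add_zero] at this
      exact this.mono_left nhdsWithin_le_nhds
    rcases (𝓝[≠] y t).eq_or_neBot with hbot | hne
    · simp [hbot]
    rw [← hlim.limsup_eq]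
    refine limsup_le_limsup ?_
    filter_upwards [self_mem_nhdsWithin] with z hz
    have hpos : 0 < dist (y t) z := dist_pos.2 (Ne.symm hz)
    refine ENNReal.ofReal_le_ofReal ?_
    rw [div_le_iff₀ hpos]
    by_cases hz' : E z = ⊤
    · rw [hz', EReal.sub_top, EReal.toReal_bot]
      positivity
    · rw [hsub z hz']
      linarith [hE z hz']
  · rcases hv0.eq_or_lt with rfl | hvpos
    · simp
    have hdpos : ∀ᶠ h in 𝓝[>] (0 : ℝ), 0 < dist (y t) (y (t + h)) := by
      filter_upwards [hv.eventually_const_lt hvpos, self_mem_nhdsWithin] with h hlt hh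
      exact (div_pos_iff_of_pos_right hh).1 hlt
    have hcurve : Tendsto (fun h => y (t + h)) (𝓝[>] 0) (𝓝[≠] y t) := by
      refine tendsto_nhdsWithin_iff.2 ⟨?_, ?_⟩
      · have h1 : Tendsto (fun h : ℝ => t + h) (𝓝 0) (𝓝 t) := by
          simpa using (continuous_const.add continuous_id).tendsto (0 : ℝ) (f := fun h => t + h)
        exact ((H.absCont.continuousAt ht).tendsto.comp h1).mono_left nhdsWithin_le_nhds
      · filter_upwards [hdpos] with h hh
        exact (dist_pos.1 hh).symm
    have hratio : Tendsto (fun h => ENNReal.ofReal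
        ((E (y t) - E (y (t + h))).toReal / dist (y t) (y (t + h)))) (𝓝[>] 0)
        (𝓝 (ENNReal.ofReal v)) := by
      refine ENNReal.tendsto_ofReal ?_
      have h1 := (H.tendsto_energy_sub_div ht hv hE).div hv hvpos.ne'
      rw [sq, mul_div_cancel_right₀ _ hvpos.ne'] at h1
      refine h1.congr' ?_
      filter_upwards [hdpos, self_mem_nhdsWithin] with h hd hh
      have hh : 0 < h := hh
      rw [hsub _ (H.energy_ne_top (by positivity)), Pi.div_apply,
        div_div_div_cancel_right₀ hh.ne']
    rw [← hratio.limsup_eq]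
    exact limsup_le_limsup_of_le (f := map (fun h => y (t + h)) (𝓝[>] (0 : ℝ)))
      (u := fun z => ENNReal.ofReal ((E (y t) - E z).toReal / dist (y t) z)) hcurve

end EVICurve

/-- **Sharp dissipation rate along a gradient flow trajectory** of a `λ`-convex lower
semicontinuous functional on a CAT(0) space: `t ↦ E(y_t)` is locally absolutely
continuous on `(0,∞)`, the right metric speed `|ẏ_t⁺|` exists for every `t > 0`, and
`lim_{h↓0} (E(y_t) − E(y_{t+h}))/h = |ẏ_t⁺|² = |∂⁻E|²(y_t)` for every `t > 0`. -/
theorem gradientFlow_sharp_dissipation {Y : Type*} [MetricSpace Y] [CompleteSpace Y]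
    (hY : Cat0 Y) (lam : ℝ) (E : Y → EReal) (hbot : ∀ y, E y ≠ ⊥)
    (hconv : LamConvex lam E) (hlsc : LowerSemicontinuous E) (hdom : ∃ y, E y ≠ ⊤)
    (y₀ : Y) (ytraj : ℝ → Y) (hgf : GradientFlow lam E y₀ ytraj) :
    (∀ t : ℝ, 0 < t → E (ytraj t) ≠ ⊤) ∧
      (∀ a b : ℝ, 0 < a → a ≤ b → AbsContOn (fun t => (E (ytraj t)).toReal) a b) ∧
      ∀ t : ℝ, 0 < t → ∃ v : ℝ, 0 ≤ v ∧
        Filter.Tendsto (fun h => dist (ytraj (t + h)) (ytraj t) / h)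
          (nhdsWithin 0 (Set.Ioi 0)) (nhds v) ∧
        Filter.Tendsto (fun h => ((E (ytraj t)).toReal - (E (ytraj (t + h))).toReal) / h)
          (nhdsWithin 0 (Set.Ioi 0)) (nhds (v ^ 2)) ∧
        descendingSlope E (ytraj t) = ENNReal.ofReal v := by
  have H : EVICurve (|lam| + 1) E ytraj :=
    { pos := by positivity
      ne_bot := hbot
      lsc := hlsc
      exists_ne_top := hdom
      absCont := hgf.1
      evi := hgf.2.2.mono (by linarith [neg_abs_le lam]) }
  refine ⟨fun t ht => H.energy_ne_top ht, fun a b ha _ => H.absContOn_energy ha,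
    fun t ht => ?_⟩
  obtain ⟨v, hv0, hv, hle⟩ := H.exists_rightSpeed ht
  have hE := fun z (hz : E z ≠ ⊤) => H.energy_sub_le_of_frequently ht (L := v)
    (Eventually.frequently <| by
      filter_upwards [self_mem_nhdsWithin] with h hh
      exact hle h (le_of_lt hh)) hz
  refine ⟨v, hv0, ?_, H.tendsto_energy_sub_div ht hv hE, H.descendingSlope_eq ht hv0 hv hE⟩
  simpa only [dist_comm] using hv
end

section
/- Let Y be a CAT(0) space, E : Y → ℝ ∪ {+∞} a λ-convex and lower semicontinuous functional with D(E) nonempty, λ ∈ ℝ. Then for every y in the closure of D(E) there exists a gradient flow trajectory for E starting from y, i.e. a locally absolutely continuous curve (y_t)_{t>0} with y_t → y as t↓0 satisfying the Evolution Variational Inequality. -/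
open Filter MeasureTheory Set Bornology
open scoped ENNReal Topology NNReal

section Resolvent

variable {Y : Type*} [MetricSpace Y]

/-- The quadrilateral inequality: the squared diagonals of a quadrilateral are bounded by the
squared sides. -/
lemma Cat0.quadrilateral (hY : Cat0 Y) (a b c d : Y) :
    dist a c ^ 2 + dist b d ^ 2 ≤
      dist a b ^ 2 + dist b c ^ 2 + dist c d ^ 2 + dist d a ^ 2 := by
  obtain ⟨γ, hγ, rfl, rfl⟩ := hY.1 a c
  have hb := hY.2 γ hγ b (1 / 2) (by norm_num)
  have hd := hY.2 γ hγ d (1 / 2) (by norm_num)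
  have htri := dist_triangle_left b d (γ (1 / 2))
  have hsq : dist b d ^ 2 ≤ (dist (γ (1 / 2)) b + dist (γ (1 / 2)) d) ^ 2 :=
    pow_le_pow_left₀ dist_nonneg htri 2
  rw [dist_comm b (γ 1), dist_comm d (γ 0)]
  nlinarith [sq_nonneg (dist (γ (1 / 2)) b - dist (γ (1 / 2)) d)]

/-- A real-valued function `F`, regarded as `+∞` outside `D`, is `lam`-convex along geodesics. -/
def LamConvexOn (D : Set Y) (F : Y → ℝ) (lam : ℝ) : Prop :=
  ∀ γ : ℝ → Y, IsGeodesic γ → γ 0 ∈ D → γ 1 ∈ D → ∀ t ∈ Icc (0 : ℝ) 1,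
    γ t ∈ D ∧ F (γ t) ≤ (1 - t) * F (γ 0) + t * F (γ 1)
      - lam / 2 * t * (1 - t) * dist (γ 0) (γ 1) ^ 2

/-- A real-valued function `F`, regarded as `+∞` outside `D`, is lower semicontinuous. -/
def LscExtended (D : Set Y) (F : Y → ℝ) : Prop :=
  ∀ z : Y, ∀ c : ℝ, (z ∈ D → c < F z) → ∀ᶠ w in 𝓝 z, w ∈ D → c < F w

lemma LamConvex.lamConvexOn {lam : ℝ} {E : Y → EReal} (hE : LamConvex lam E)
    (hbot : ∀ y, E y ≠ ⊥) : LamConvexOn {z | E z ≠ ⊤} (fun z => (E z).toReal) lam := by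
  intro γ hγ h0 h1 t ht
  have h := hE γ hγ t ht
  rw [← EReal.coe_toReal h0 (hbot _), ← EReal.coe_toReal h1 (hbot _)] at h
  have hne : E (γ t) ≠ ⊤ := by
    intro htop
    rw [htop] at h
    exact EReal.coe_ne_top _ (top_le_iff.mp (by exact_mod_cast h))
  refine ⟨hne, ?_⟩
  rw [← EReal.coe_toReal hne (hbot _)] at h
  exact_mod_cast h

lemma LowerSemicontinuous.lscExtended {E : Y → EReal} (hE : LowerSemicontinuous E)
    (hbot : ∀ y, E y ≠ ⊥) : LscExtended {z | E z ≠ ⊤} (fun z => (E z).toReal) := by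
  intro z c hc
  have hlt : (c : EReal) < E z := by
    by_cases hz : E z = ⊤
    · rw [hz]; exact EReal.coe_lt_top c
    · rw [← EReal.coe_toReal hz (hbot z)]
      exact_mod_cast hc hz
  filter_upwards [hE z c hlt] with w hw hwD
  rw [← EReal.coe_toReal hwD (hbot w)] at hw
  exact_mod_cast hw

lemma LamConvexOn.mono {D : Set Y} {F : Y → ℝ} {lam lam' : ℝ} (hF : LamConvexOn D F lam)
    (h : lam' ≤ lam) : LamConvexOn D F lam' := by
  intro γ hγ h0 h1 t ht
  obtain ⟨hmem, hle⟩ := hF γ hγ h0 h1 t ht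
  refine ⟨hmem, hle.trans ?_⟩
  have := mul_nonneg ht.1 (sub_nonneg.mpr ht.2)
  have := mul_le_mul_of_nonneg_right h (mul_nonneg this (sq_nonneg (dist (γ 0) (γ 1))))
  linarith

/-- The sublevel condition passes to limits. -/
lemma LscExtended.mem_and_le {D : Set Y} {F : Y → ℝ} (hF : LscExtended D F) {z : ℕ → Y} {x : Y}
    {c : ℕ → ℝ} {m : ℝ} (hz : Tendsto z atTop (𝓝 x)) (hzD : ∀ n, z n ∈ D)
    (hzc : ∀ n, F (z n) ≤ c n) (hc : Tendsto c atTop (𝓝 m)) : x ∈ D ∧ F x ≤ m := by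
  have key : ∀ m' > m, x ∈ D ∧ F x ≤ m' := by
    intro m' hm'
    by_contra hcon
    have hev := hF x m' (fun hx => not_le.mp fun hle => hcon ⟨hx, hle⟩)
    obtain ⟨n, hn1, hn2⟩ := ((hz.eventually hev).and (hc.eventually (gt_mem_nhds hm'))).exists
    have := hn1 (hzD n)
    linarith [hzc n]
  exact ⟨(key (m + 1) (by linarith)).1, le_of_forall_gt_imp_ge_of_dense fun m' hm' => (key m' hm').2⟩

/-- A semiconvex lower semicontinuous function is bounded below by a negative quadratic. -/
lemma exists_quadratic_lower_bound (hY : GeodesicSpace Y) {D : Set Y} {F : Y → ℝ} {K : ℝ}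
    (hK : 0 ≤ K) (hconv : LamConvexOn D F (-K)) (hlsc : LscExtended D F) {z₀ : Y} (hz₀ : z₀ ∈ D) :
    ∃ A B : ℝ, 0 ≤ B ∧ ∀ z ∈ D, -A - B * dist z z₀ ^ 2 ≤ F z := by
  obtain ⟨r, hr, hball⟩ := Metric.eventually_nhds_iff.mp
    (hlsc z₀ (F z₀ - 1) (fun _ => by linarith))
  refine ⟨1 - F z₀, 1 / r ^ 2 * 4 + K / 2, by positivity, fun z hz => ?_⟩
  by_cases hzr : dist z z₀ < r
  · have := hball hzr hz
    have : 0 ≤ (1 / r ^ 2 * 4 + K / 2) * dist z z₀ ^ 2 := by positivity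
    linarith
  push Not at hzr
  obtain ⟨γ, hγ, h0, h1⟩ := hY z₀ z
  have hR : 0 < dist z z₀ := lt_of_lt_of_le hr hzr
  set R := dist z z₀ with hRdef
  have hdist : dist (γ 0) (γ 1) = R := by rw [h0, h1, dist_comm]
  set t := r / (2 * R) with ht
  have htR : t * R = r / 2 := by rw [ht]; field_simp
  have ht0 : 0 < t := by positivity
  have ht1 : t ≤ 1 := by rw [ht, div_le_one (by positivity)]; linarith
  obtain ⟨hmem, hle⟩ := hconv γ hγ (h0 ▸ hz₀) (h1 ▸ hz) t ⟨ht0.le, ht1⟩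
  have hlow := hball (y := γ t) (by
    have := hγ t ⟨ht0.le, ht1⟩ 0 ⟨le_rfl, zero_le_one⟩
    rw [hdist, sub_zero, abs_of_pos ht0, htR, h0] at this
    rw [this]; linarith) hmem
  rw [hdist, h0, h1] at hle
  have h2 : t * (F z₀ - F z) ≤ 1 + K / 2 * t * (1 - t) * R ^ 2 := by nlinarith
  have h3 : t * (F z₀ - F z) ≤ t * (1 / t + K / 2 * R ^ 2) := by
    have : t * (1 / t) = 1 := by field_simp
    nlinarith [mul_nonneg (mul_nonneg hK (sq_nonneg t)) (sq_nonneg R)]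
  have h4 := le_of_mul_le_mul_left h3 ht0
  have h5 : 1 / t ≤ 1 / r ^ 2 * 4 * R ^ 2 := by
    rw [div_le_iff₀ ht0]
    have : 1 / r ^ 2 * 4 * R ^ 2 * t = 2 * R / r := by
      rw [ht]; field_simp; norm_num
    rw [this, le_div_iff₀ hr]
    linarith
  linarith

/-- `J` is a resolvent with step `τ`: it satisfies the discrete evolution variational
inequality. -/
def IsResolvent (D : Set Y) (F : Y → ℝ) (lam τ : ℝ) (J : Y → Y) : Prop :=
  ∀ x, J x ∈ D ∧ ∀ z ∈ D, (1 + lam * τ) * dist (J x) z ^ 2 + dist (J x) x ^ 2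
    + 2 * τ * F (J x) ≤ dist x z ^ 2 + 2 * τ * F z

/-- Minimizers of `2 τ F + d(·, x)²` satisfy the discrete evolution variational inequality. -/
lemma discrete_evi_of_minimizer (hY : Cat0 Y) {D : Set Y} {F : Y → ℝ} {lam τ : ℝ} (hτ : 0 < τ)
    (hconv : LamConvexOn D F lam) {x u : Y} (hu : u ∈ D)
    (hmin : ∀ z ∈ D, 2 * τ * F u + dist u x ^ 2 ≤ 2 * τ * F z + dist z x ^ 2) {z : Y}
    (hz : z ∈ D) :
    (1 + lam * τ) * dist u z ^ 2 + dist u x ^ 2 + 2 * τ * F u ≤ dist x z ^ 2 + 2 * τ * F z := by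
  obtain ⟨γ, hγ, h0, h1⟩ := hY.1 u z
  have key : ∀ t ∈ Ioo (0 : ℝ) 1, (1 - t) * ((1 + lam * τ) * dist u z ^ 2) + dist u x ^ 2
      + 2 * τ * F u ≤ dist x z ^ 2 + 2 * τ * F z := by
    intro t ht
    have htI : t ∈ Icc (0 : ℝ) 1 := ⟨ht.1.le, ht.2.le⟩
    obtain ⟨hmem, hle⟩ := hconv γ hγ (h0 ▸ hu) (h1 ▸ hz) t htI
    have hd := hY.2 γ hγ x t htI
    have hm := hmin _ hmem
    rw [h0, h1] at hle hd
    have hle' := mul_le_mul_of_nonneg_left hle (by positivity : 0 ≤ 2 * τ)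
    rw [dist_comm x z]
    refine le_of_mul_le_mul_left ?_ ht.1
    nlinarith
  have hlim : Tendsto (fun t : ℝ => (1 - t) * ((1 + lam * τ) * dist u z ^ 2) + dist u x ^ 2
      + 2 * τ * F u) (𝓝[>] 0) (𝓝 ((1 - 0) * ((1 + lam * τ) * dist u z ^ 2) + dist u x ^ 2
      + 2 * τ * F u)) := by
    refine Tendsto.mono_left (Continuous.tendsto ?_ 0) nhdsWithin_le_nhds
    fun_prop
  have := le_of_tendsto hlim (by
    filter_upwards [Ioo_mem_nhdsGT (zero_lt_one' ℝ)] with t ht using key t ht)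
  linarith

lemma exists_isResolvent [CompleteSpace Y] (hY : Cat0 Y) {D : Set Y} {F : Y → ℝ} {lam τ A B : ℝ}
    (hτ : 0 < τ) (hconv : LamConvexOn D F lam) (hlsc : LscExtended D F) {z₀ : Y} (hz₀ : z₀ ∈ D)
    (hB : 0 ≤ B) (hlow : ∀ z ∈ D, -A - B * dist z z₀ ^ 2 ≤ F z) (hBτ : 4 * B * τ ≤ 1)
    (hlam : 0 < 1 + lam * τ) : ∃ J : Y → Y, IsResolvent D F lam τ J := by
  suffices h : ∀ x, ∃ u ∈ D, ∀ z ∈ D,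
      2 * τ * F u + dist u x ^ 2 ≤ 2 * τ * F z + dist z x ^ 2 by
    choose J hJ hmin using h
    exact ⟨J, fun x => ⟨hJ x, fun z hz =>
      discrete_evi_of_minimizer hY hτ hconv (hJ x) (hmin x) hz⟩⟩
  intro x
  set G : Y → ℝ := fun z => 2 * τ * F z + dist z x ^ 2 with hG
  have hbdd : BddBelow (G '' D) := by
    refine ⟨-(2 * τ * A + 4 * B * τ * dist x z₀ ^ 2), ?_⟩
    rintro _ ⟨z, hz, rfl⟩
    have h1 := mul_le_mul_of_nonneg_left (hlow z hz) (by positivity : 0 ≤ 2 * τ)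
    have h2 : dist z z₀ ^ 2 ≤ 2 * dist z x ^ 2 + 2 * dist x z₀ ^ 2 := by
      have := pow_le_pow_left₀ dist_nonneg (dist_triangle z x z₀) 2
      nlinarith [sq_nonneg (dist z x - dist x z₀)]
    have h3 := mul_le_mul_of_nonneg_left h2 (by positivity : 0 ≤ 2 * τ * B)
    have h4 := mul_le_mul_of_nonneg_right hBτ (sq_nonneg (dist z x))
    simp only [hG]
    linarith
  set m := sInf (G '' D) with hm
  have hmle : ∀ z ∈ D, m ≤ G z := fun z hz => csInf_le hbdd (mem_image_of_mem G hz)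
  have happrox : ∀ n : ℕ, ∃ z ∈ D, G z < m + 1 / ((n : ℝ) + 1) := by
    intro n
    obtain ⟨_, ⟨z, hz, rfl⟩, hlt⟩ := exists_lt_of_csInf_lt (Set.Nonempty.image G ⟨z₀, hz₀⟩)
      (lt_add_of_pos_right m (by positivity : 0 < 1 / ((n : ℝ) + 1)))
    exact ⟨z, hz, hlt⟩
  choose z hzD hzG using happrox
  have hmid : ∀ v ∈ D, ∀ w ∈ D, (1 + lam * τ) * dist v w ^ 2 ≤ 2 * (G v - m) + 2 * (G w - m) := by
    intro v hv w hw
    obtain ⟨γ, hγ, h0, h1⟩ := hY.1 v w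
    have hI : (1 / 2 : ℝ) ∈ Icc (0 : ℝ) 1 := by norm_num
    obtain ⟨hmem, hle⟩ := hconv γ hγ (h0 ▸ hv) (h1 ▸ hw) _ hI
    have hd := hY.2 γ hγ x _ hI
    have hmm := hmle _ hmem
    rw [h0, h1] at hle hd
    have hle' := mul_le_mul_of_nonneg_left hle (by positivity : 0 ≤ 2 * τ)
    simp only [hG] at hmm ⊢
    linarith
  have htend : Tendsto (fun n : ℕ => 1 / ((n : ℝ) + 1)) atTop (𝓝 0) :=
    tendsto_one_div_add_atTop_nhds_zero_nat
  have hcauchy : CauchySeq z := by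
    refine Metric.cauchySeq_iff'.mpr fun ε hε => ?_
    obtain ⟨N, hN⟩ := (htend.eventually (gt_mem_nhds
      (by positivity : 0 < (1 + lam * τ) * ε ^ 2 / 4))).exists
    refine ⟨N, fun n hn => ?_⟩
    have h1 := hmid _ (hzD n) _ (hzD N)
    have h2 : 1 / ((n : ℝ) + 1) ≤ 1 / ((N : ℝ) + 1) := Nat.one_div_le_one_div hn
    have h3 : (1 + lam * τ) * dist (z n) (z N) ^ 2 < (1 + lam * τ) * ε ^ 2 := by
      linarith [hzG n, hzG N]
    exact lt_of_pow_lt_pow_left₀ 2 hε.le (lt_of_mul_lt_mul_left h3 hlam.le)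
  obtain ⟨u, hu⟩ := cauchySeq_tendsto_of_complete hcauchy
  have hdist : Tendsto (fun n => dist (z n) x ^ 2) atTop (𝓝 (dist u x ^ 2)) :=
    (hu.dist tendsto_const_nhds).pow 2
  obtain ⟨huD, hFu⟩ := hlsc.mem_and_le (m := (m + 0 - dist u x ^ 2) / (2 * τ))
    (c := fun n : ℕ => (m + 1 / ((n : ℝ) + 1) - dist (z n) x ^ 2) / (2 * τ)) hu hzD
    (fun n => by
      rw [le_div_iff₀ (by positivity)]
      have := hzG n
      simp only [hG] at this
      linarith)
    (((htend.const_add m).sub hdist).div_const _)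
  refine ⟨u, huD, fun w hw => ?_⟩
  rw [le_div_iff₀ (by positivity)] at hFu
  have := hmle w hw
  simp only [hG] at this
  linarith

end Resolvent

section DiscreteEstimates

variable {Y : Type*} [MetricSpace Y] {D : Set Y} {F : Y → ℝ} {K σ : ℝ} {J : Y → Y}

lemma IsResolvent.mono {lam : ℝ} (hJ : IsResolvent D F lam σ J) (hσ : 0 < σ) (hlam : -K ≤ lam) :
    IsResolvent D F (-K) σ J := by
  intro x
  refine ⟨(hJ x).1, fun z hz => le_trans ?_ ((hJ x).2 z hz)⟩
  gcongr

lemma IsResolvent.iterate_mem {lam : ℝ} (hJ : IsResolvent D F lam σ J) {x : Y} {n : ℕ}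
    (h : n ≠ 0 ∨ x ∈ D) : J^[n] x ∈ D := by
  cases n with
  | zero => simpa using h
  | succ n => rw [Function.iterate_succ_apply']; exact (hJ _).1

/-- Each step dissipates energy. -/
lemma IsResolvent.dist_sq_le (hJ : IsResolvent D F (-K) σ J) (hKσ : K * σ ≤ 1) {x : Y}
    (hx : x ∈ D) : dist (J x) x ^ 2 ≤ 2 * σ * (F x - F (J x)) := by
  have h := (hJ x).2 x hx
  rw [dist_self] at h
  have := mul_nonneg (sub_nonneg.mpr hKσ) (sq_nonneg (dist (J x) x))
  linarith

/-- The energy is nonincreasing along the iterates, and controls the displacement. -/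
lemma IsResolvent.iterate_dist_sq_le (hJ : IsResolvent D F (-K) σ J) (hσ : 0 < σ)
    (hKσ : K * σ ≤ 1) {x : Y} (hx : x ∈ D) (n : ℕ) :
    F (J^[n] x) ≤ F x ∧ dist (J^[n] x) x ^ 2 ≤ n * (2 * σ * (F x - F (J^[n] x))) := by
  induction n with
  | zero => simp
  | succ n ih =>
    obtain ⟨ih1, ih2⟩ := ih
    have hstep := hJ.dist_sq_le hKσ (hJ.iterate_mem (n := n) (Or.inr hx))
    rw [Function.iterate_succ_apply']
    set v := J^[n] x
    set S := 2 * σ * (F x - F v) with hS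
    set s := 2 * σ * (F v - F (J v)) with hs
    have hs0 : 0 ≤ s := le_trans (sq_nonneg _) hstep
    have hS0 : 0 ≤ S := mul_nonneg (by positivity) (by linarith)
    have hn : (0 : ℝ) ≤ n := n.cast_nonneg
    have hsum : 2 * σ * (F x - F (J v)) = S + s := by rw [hS, hs]; ring
    have hle : F (J v) ≤ F v := by
      have := nonneg_of_mul_nonneg_right hs0 (by positivity)
      linarith
    refine ⟨hle.trans ih1, ?_⟩
    rw [hsum]
    have htri : dist (J v) x ^ 2 ≤ (dist (J v) v + dist v x) ^ 2 :=
      pow_le_pow_left₀ dist_nonneg (dist_triangle _ _ _) 2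
    have hprod : dist (J v) v ^ 2 * dist v x ^ 2 ≤ s * (n * S) :=
      mul_le_mul hstep ih2 (sq_nonneg _) hs0
    have hcross : 2 * (dist (J v) v * dist v x) ≤ S + n * s := by
      refine le_of_sq_le_sq ?_ (by positivity)
      nlinarith [sq_nonneg (S - n * s)]
    push_cast
    nlinarith

lemma IsResolvent.energy_antitone (hJ : IsResolvent D F (-K) σ J) (hσ : 0 < σ)
    (hKσ : K * σ ≤ 1) {x : Y} {i j : ℕ} (h : i ≠ 0 ∨ x ∈ D) (hij : i ≤ j) :
    F (J^[j] x) ≤ F (J^[i] x) ∧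
      dist (J^[j] x) (J^[i] x) ^ 2 ≤ (j - i : ℝ) * (2 * σ * (F (J^[i] x) - F (J^[j] x))) := by
  obtain ⟨k, rfl⟩ := Nat.exists_eq_add_of_le hij
  have := hJ.iterate_dist_sq_le hσ hKσ (hJ.iterate_mem h) k
  rw [← Function.iterate_add_apply, add_comm k i] at this
  push_cast
  rwa [add_sub_cancel_left]

lemma IsResolvent.contraction (hY : Cat0 Y) (hJ : IsResolvent D F (-K) σ J) (x x' : Y) :
    (1 - 2 * K * σ) * dist (J x) (J x') ^ 2 ≤ dist x x' ^ 2 := by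
  have h1 := (hJ x).2 _ (hJ x').1
  have h2 := (hJ x').2 _ (hJ x).1
  have h3 := hY.quadrilateral x x' (J x') (J x)
  rw [dist_comm (J x') (J x)] at *
  rw [dist_comm (J x') x'] at *
  nlinarith

lemma IsResolvent.iterate_contraction (hY : Cat0 Y) (hJ : IsResolvent D F (-K) σ J)
    {q : ℝ} (hq0 : 0 ≤ q) (hq : q ≤ 1 - 2 * K * σ) (x x' : Y) (n : ℕ) :
    q ^ n * dist (J^[n] x) (J^[n] x') ^ 2 ≤ dist x x' ^ 2 := by
  induction n with
  | zero => simp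
  | succ n ih =>
    refine le_trans ?_ ih
    rw [Function.iterate_succ_apply', Function.iterate_succ_apply', pow_succ, mul_assoc]
    gcongr
    refine le_trans ?_ (hJ.contraction hY _ _)
    gcongr

/-- Comparison of one step of length `m σ` with `m` steps of length `σ`. -/
lemma IsResolvent.dist_coarse_fine_step (hY : Cat0 Y) (hK : 0 ≤ K) (hσ : 0 < σ) {m : ℕ}
    (hJ : IsResolvent D F (-K) (m * σ) J) {L : Y → Y} (hL : IsResolvent D F (-K) σ L)
    (hm : m ≠ 0) (hKσ : 2 * K * (m * σ) ≤ 1) (x : Y) {w : Y} (hw : w ∈ D) :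
    (1 - 3 * K * (m * σ)) * dist (J x) (L^[m] w) ^ 2 ≤
      dist x w ^ 2 + 4 * (m * σ) * (F w - F (L^[m] w)) := by
  set τ := (m : ℝ) * σ with hτ
  have hm1 : (1 : ℝ) ≤ m := by exact_mod_cast Nat.one_le_iff_ne_zero.mpr hm
  have hστ : σ ≤ τ := by nlinarith
  have hKσ1 : K * σ ≤ 1 := by nlinarith [mul_le_mul_of_nonneg_left hστ hK, mul_nonneg hK hσ.le]
  set u := J x with hu
  set v := L^[m] w with hv
  have huD : u ∈ D := (hJ x).1
  have hvD : v ∈ D := hL.iterate_mem (Or.inr hw)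
  have hFv : 0 ≤ F w - F v := by
    linarith [(hL.iterate_dist_sq_le hσ hKσ1 hw m).1]
  set Q := 2 * dist v u ^ 2 + 4 * τ * (F w - F v) with hQ
  have hclose : ∀ j ≤ m, dist v (L^[j] w) ^ 2 ≤ 2 * τ * (F w - F v) ∧ F v ≤ F (L^[j] w) := by
    intro j hj
    have h1 := hL.energy_antitone hσ hKσ1 (x := w) (Or.inr hw) hj
    have h2 := (hL.iterate_dist_sq_le hσ hKσ1 hw j).1
    refine ⟨h1.2.trans ?_, h1.1⟩
    have hj0 : (0 : ℝ) ≤ j := j.cast_nonneg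
    have hjm : (j : ℝ) ≤ m := by exact_mod_cast hj
    calc (m - j : ℝ) * (2 * σ * (F (L^[j] w) - F v)) ≤ m * (2 * σ * (F w - F v)) := by
          gcongr
          · exact mul_nonneg (by positivity) (by linarith [h1.1])
          · linarith
      _ = 2 * τ * (F w - F v) := by rw [hτ]; ring
  have hdist : ∀ j ≤ m, dist (L^[j] w) u ^ 2 ≤ Q := by
    intro j hj
    have h1 := (hclose j hj).1
    have h2 := pow_le_pow_left₀ dist_nonneg (dist_triangle_left (L^[j] w) u v) 2
    nlinarith [sq_nonneg (dist v (L^[j] w) - dist v u)]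
  have hsum : ∀ j ≤ m, dist (L^[j] w) u ^ 2 ≤
      dist w u ^ 2 + j * (K * σ * Q - 2 * σ * (F v - F u)) := by
    intro j
    induction j with
    | zero => simp
    | succ j ih =>
      intro hj
      have h1 := ih (by omega)
      have h2 := (hL (L^[j] w)).2 u huD
      rw [← Function.iterate_succ_apply' L j w] at h2
      have h3 := mul_le_mul_of_nonneg_left (hdist _ hj) (mul_nonneg hK hσ.le)
      have h4 := mul_le_mul_of_nonneg_left (hclose _ hj).2 (by positivity : 0 ≤ 2 * σ)
      have h5 := sq_nonneg (dist (L^[j + 1] w) (L^[j] w))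
      push_cast
      linarith
  have h1 := hsum m le_rfl
  have h2 := (hJ x).2 v hvD
  have h3 := hY.quadrilateral x w v u
  have h4 := (hclose 0 (Nat.zero_le m)).1
  have h5 : (m : ℝ) * (K * σ * Q - 2 * σ * (F v - F u)) = K * τ * Q - 2 * τ * (F v - F u) := by
    rw [hτ]; ring
  have h6 := mul_le_mul_of_nonneg_right hKσ (mul_nonneg (by positivity : 0 ≤ 2 * τ) hFv)
  rw [Function.iterate_zero_apply] at h4
  rw [h5] at h1
  rw [← hu] at h2
  rw [← hv] at h1
  simp only [dist_comm v u, dist_comm v w] at *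
  nlinarith

/-- Comparison of `n` steps of length `m σ` with `m n` steps of length `σ`. -/
lemma IsResolvent.dist_coarse_fine (hY : Cat0 Y) (hK : 0 ≤ K) (hσ : 0 < σ) {m : ℕ}
    (hJ : IsResolvent D F (-K) (m * σ) J) {L : Y → Y} (hL : IsResolvent D F (-K) σ L)
    (hm : m ≠ 0) (hKσ : 2 * K * (m * σ) ≤ 1) {q : ℝ} (hq0 : 0 ≤ q)
    (hq : q ≤ 1 - 3 * K * (m * σ)) {x : Y} (hx : x ∈ D) (n : ℕ) :
    q ^ n * dist (J^[n] x) (L^[m * n] x) ^ 2 ≤ 4 * (m * σ) * (F x - F (L^[m * n] x)) := by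
  have hm1 : (1 : ℝ) ≤ m := by exact_mod_cast Nat.one_le_iff_ne_zero.mpr hm
  have hστ : σ ≤ m * σ := by nlinarith
  have hKσ1 : K * σ ≤ 1 := by nlinarith [mul_le_mul_of_nonneg_left hστ hK, mul_nonneg hK hσ.le]
  have hq1 : q ≤ 1 := hq.trans (by linarith [mul_nonneg hK (by positivity : 0 ≤ m * σ)])
  induction n with
  | zero => simp
  | succ n ih =>
    have hwD := hL.iterate_mem (n := m * n) (Or.inr hx)
    have h1 := hJ.dist_coarse_fine_step hY hK hσ hL hm hKσ (J^[n] x) hwD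
    have h2 := (hL.iterate_dist_sq_le hσ hKσ1 hwD m).1
    rw [← Function.iterate_add_apply, show m + m * n = m * (n + 1) by ring] at h1 h2
    rw [Function.iterate_succ_apply']
    set d := dist (J (J^[n] x)) (L^[m * (n + 1)] x) ^ 2
    set e := 4 * (m * σ) * (F (L^[m * n] x) - F (L^[m * (n + 1)] x)) with he
    have he0 : 0 ≤ e := mul_nonneg (by positivity) (by linarith)
    have h3 : q * d ≤ dist (J^[n] x) (L^[m * n] x) ^ 2 + e :=
      le_trans (by gcongr) h1
    have h4 := mul_le_mul_of_nonneg_left h3 (pow_nonneg hq0 n)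
    have h5 : q ^ n * e ≤ e := mul_le_of_le_one_left he0 (pow_le_one₀ hq0 hq1)
    rw [pow_succ]
    nlinarith

/-- The iterates stay bounded on bounded time intervals. -/
lemma IsResolvent.iterate_dist_sq_bound (hJ : IsResolvent D F (-K) σ J) (hσ : 0 < σ)
    {A B q : ℝ} {z₀ : Y} (hz₀ : z₀ ∈ D) (hlow : ∀ z ∈ D, -A - B * dist z z₀ ^ 2 ≤ F z)
    (hq0 : 0 ≤ q) (hq1 : q ≤ 1) (hq : q ≤ 1 - K * σ - 2 * B * σ) (x : Y) (n : ℕ) :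
    q ^ n * dist (J^[n] x) z₀ ^ 2 ≤ dist x z₀ ^ 2 + 2 * (n * σ) * (F z₀ + A) := by
  have hA : 0 ≤ F z₀ + A := by
    have := hlow z₀ hz₀
    rw [dist_self] at this
    linarith
  induction n with
  | zero => simp
  | succ n ih =>
    have h1 := (hJ (J^[n] x)).2 z₀ hz₀
    have h2 := hlow _ (hJ (J^[n] x)).1
    rw [← Function.iterate_succ_apply' J n x] at h1 h2
    have h2' := mul_le_mul_of_nonneg_left h2 (by positivity : 0 ≤ 2 * σ)
    set d := dist (J^[n + 1] x) z₀ ^ 2 with hd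
    have h3 : q * d ≤ dist (J^[n] x) z₀ ^ 2 + 2 * σ * (F z₀ + A) := by
      have := mul_le_mul_of_nonneg_right hq (sq_nonneg (dist (J^[n + 1] x) z₀))
      have := sq_nonneg (dist (J^[n + 1] x) (J^[n] x))
      linarith
    have h4 := mul_le_mul_of_nonneg_left h3 (pow_nonneg hq0 n)
    have h5 : q ^ n * (2 * σ * (F z₀ + A)) ≤ 2 * σ * (F z₀ + A) :=
      mul_le_of_le_one_left (by positivity) (pow_le_one₀ hq0 hq1)
    rw [pow_succ]
    push_cast
    nlinarith

lemma exp_neg_le_one_sub_pow {P T : ℝ} (hP : 0 ≤ P) (hσ : 0 ≤ σ) (hPσ : P * σ ≤ 1 / 2) {n : ℕ}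
    (hn : n * σ ≤ T) : Real.exp (-(2 * P * T)) ≤ (1 - P * σ) ^ n := by
  have h0 : 0 ≤ P * σ := mul_nonneg hP hσ
  have h1 : Real.exp (-(2 * (P * σ))) ≤ 1 - P * σ := by
    rw [Real.exp_neg, inv_le_comm₀ (Real.exp_pos _) (by linarith)]
    refine le_trans ?_ (Real.add_one_le_exp _)
    rw [inv_le_iff_one_le_mul₀ (by linarith)]
    nlinarith
  calc Real.exp (-(2 * P * T)) ≤ Real.exp (n * -(2 * (P * σ))) := by
        rw [Real.exp_le_exp]
        nlinarith
    _ = Real.exp (-(2 * (P * σ))) ^ n := Real.exp_nat_mul _ _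
    _ ≤ (1 - P * σ) ^ n := pow_le_pow_left₀ (Real.exp_pos _).le h1 n

end DiscreteEstimates

section UniformEstimates

variable {Y : Type*} [MetricSpace Y] {D : Set Y} {F : Y → ℝ} {K A B P σ T : ℝ} {z₀ : Y}
  {J : Y → Y}

/-- Quadratic lower bound for the energy, together with the constant `P` that governs the
exponential growth of all estimates on the discrete flow. -/
structure EnergyBound (D : Set Y) (F : Y → ℝ) (K A B P : ℝ) (z₀ : Y) : Prop where
  K_nonneg : 0 ≤ K
  B_nonneg : 0 ≤ B
  le_P : 4 * K + 4 * B ≤ P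
  mem : z₀ ∈ D
  lower : ∀ z ∈ D, -A - B * dist z z₀ ^ 2 ≤ F z

lemma EnergyBound.P_nonneg (H : EnergyBound D F K A B P z₀) : 0 ≤ P := by
  linarith [H.K_nonneg, H.B_nonneg, H.le_P]

lemma EnergyBound.four_mul_le (H : EnergyBound D F K A B P z₀) (hσ : 0 < σ) :
    4 * (K * σ) + 4 * (B * σ) ≤ P * σ := by
  have := mul_le_mul_of_nonneg_right H.le_P hσ.le
  linarith

lemma EnergyBound.le_exp_mul (H : EnergyBound D F K A B P z₀) (hσ : 0 < σ) (hPσ : P * σ ≤ 1 / 2)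
    {n : ℕ} (hn : n * σ ≤ T) {X Z : ℝ} (hX : 0 ≤ X) (h : (1 - P * σ) ^ n * X ≤ Z) :
    X ≤ Real.exp (2 * P * T) * Z := by
  have h1 := mul_le_mul_of_nonneg_right
    (exp_neg_le_one_sub_pow H.P_nonneg hσ.le hPσ hn) hX
  rw [Real.exp_neg, inv_mul_eq_div] at h1
  have h2 := (div_le_iff₀ (Real.exp_pos _)).mp (h1.trans h)
  linarith

lemma EnergyBound.contraction (H : EnergyBound D F K A B P z₀) (hY : Cat0 Y) (hσ : 0 < σ)
    (hPσ : P * σ ≤ 1 / 2) (hJ : IsResolvent D F (-K) σ J) {n : ℕ} (hn : n * σ ≤ T) (x x' : Y) :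
    dist (J^[n] x) (J^[n] x') ^ 2 ≤ Real.exp (2 * P * T) * dist x x' ^ 2 := by
  have h4 := H.four_mul_le hσ
  have hK := mul_nonneg H.K_nonneg hσ.le
  have hB := mul_nonneg H.B_nonneg hσ.le
  exact H.le_exp_mul hσ hPσ hn (sq_nonneg _)
    (hJ.iterate_contraction hY (by linarith) (by linarith) x x' n)

lemma EnergyBound.dist_le_exp_mul (H : EnergyBound D F K A B P z₀) (hY : Cat0 Y) (hσ : 0 < σ)
    (hPσ : P * σ ≤ 1 / 2) (hJ : IsResolvent D F (-K) σ J) {n : ℕ} (hn : n * σ ≤ T) (x x' : Y) :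
    dist (J^[n] x) (J^[n] x') ≤ Real.exp (P * T) * dist x x' := by
  refine le_of_sq_le_sq ((H.contraction hY hσ hPσ hJ hn x x').trans_eq ?_) (by positivity)
  rw [mul_pow, ← Real.exp_nat_mul]
  push_cast
  ring_nf

/-- Bound for the squared distance from `z₀` up to time `T` of discrete flows starting at `x`. -/
noncomputable def radiusBound (F : Y → ℝ) (A P : ℝ) (z₀ : Y) (T : ℝ) (x : Y) : ℝ :=
  Real.exp (2 * P * T) * (dist x z₀ ^ 2 + 2 * T * (F z₀ + A))

lemma EnergyBound.base_nonneg (H : EnergyBound D F K A B P z₀) : 0 ≤ F z₀ + A := by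
  have := H.lower z₀ H.mem
  rw [dist_self] at this
  linarith

lemma EnergyBound.dist_sq_le_radiusBound (H : EnergyBound D F K A B P z₀) (hσ : 0 < σ)
    (hPσ : P * σ ≤ 1 / 2) (hJ : IsResolvent D F (-K) σ J) {n : ℕ} (hn : n * σ ≤ T) (x : Y) :
    dist (J^[n] x) z₀ ^ 2 ≤ radiusBound F A P z₀ T x := by
  have h4 := H.four_mul_le hσ
  have hK := mul_nonneg H.K_nonneg hσ.le
  have hB := mul_nonneg H.B_nonneg hσ.le
  refine H.le_exp_mul hσ hPσ hn (sq_nonneg _)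
    ((hJ.iterate_dist_sq_bound hσ H.mem H.lower (by linarith) (by linarith) (by linarith) x n).trans
      ?_)
  have := H.base_nonneg
  gcongr

lemma EnergyBound.energy_lower (H : EnergyBound D F K A B P z₀) (hσ : 0 < σ)
    (hPσ : P * σ ≤ 1 / 2) (hJ : IsResolvent D F (-K) σ J) {n : ℕ} (hn : n * σ ≤ T) {x : Y}
    (h : n ≠ 0 ∨ x ∈ D) : -(A + B * radiusBound F A P z₀ T x) ≤ F (J^[n] x) := by
  have h1 := H.lower _ (hJ.iterate_mem h)
  have h2 := mul_le_mul_of_nonneg_left (H.dist_sq_le_radiusBound hσ hPσ hJ hn x) H.B_nonneg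
  linarith

/-- Discrete flows starting in the domain depart from their starting point like `√t`. -/
lemma EnergyBound.dist_start_sq_le (H : EnergyBound D F K A B P z₀) (hσ : 0 < σ)
    (hPσ : P * σ ≤ 1 / 2) (hJ : IsResolvent D F (-K) σ J) {n : ℕ} (hn : n * σ ≤ T) {x : Y}
    (hx : x ∈ D) : dist (J^[n] x) x ^ 2 ≤
      2 * (F x + (A + B * radiusBound F A P z₀ T x)) * (n * σ) := by
  have h4 := H.four_mul_le hσ
  have hB := mul_nonneg H.B_nonneg hσ.le
  have h1 := (hJ.iterate_dist_sq_le hσ (by linarith) hx n).2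
  have h2 := H.energy_lower hσ hPσ hJ hn (Or.inr hx)
  refine h1.trans ?_
  have : (0 : ℝ) ≤ n * σ := by positivity
  nlinarith

/-- Discrete flows with commensurable steps are close to each other. -/
lemma EnergyBound.dist_floor_sq_le (H : EnergyBound D F K A B P z₀) (hY : Cat0 Y) (hσ : 0 < σ)
    {m : ℕ} (hm : m ≠ 0) (hPσ : P * (m * σ) ≤ 1 / 2) (hJ : IsResolvent D F (-K) (m * σ) J)
    {L : Y → Y} (hL : IsResolvent D F (-K) σ L) {x : Y} (hx : x ∈ D) {t : ℝ} (ht0 : 0 ≤ t)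
    (htT : t ≤ T) :
    dist (J^[⌊t / (m * σ)⌋₊] x) (L^[⌊t / σ⌋₊] x) ^ 2 ≤
      (8 * Real.exp (2 * P * T) + 4) * (F x + (A + B * radiusBound F A P z₀ T x)) * (m * σ) := by
  have hm0 : (0 : ℝ) < m := by exact_mod_cast Nat.pos_of_ne_zero hm
  have hm1 : (1 : ℝ) ≤ m := by exact_mod_cast Nat.one_le_iff_ne_zero.mpr hm
  have hτ : 0 < m * σ := by positivity
  have hστ : σ ≤ m * σ := by nlinarith
  have hPσ' : P * σ ≤ 1 / 2 := (mul_le_mul_of_nonneg_left hστ H.P_nonneg).trans hPσ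
  have h4 := H.four_mul_le hτ
  have h4' := H.four_mul_le hσ
  have hKτ := mul_nonneg H.K_nonneg hτ.le
  have hBτ := mul_nonneg H.B_nonneg hτ.le
  have hBσ := mul_nonneg H.B_nonneg hσ.le
  set n := ⌊t / (m * σ)⌋₊ with hn
  set n' := ⌊t / σ⌋₊ with hn'
  have hnτ : n * (m * σ) ≤ t := (le_div_iff₀ hτ).mp (Nat.floor_le (by positivity))
  have hnσ : n' * σ ≤ t := (le_div_iff₀ hσ).mp (Nat.floor_le (by positivity))
  have hlt : t < (n + 1) * (m * σ) := (div_lt_iff₀ hτ).mp (Nat.lt_floor_add_one _)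
  have hle : m * n ≤ n' := by
    refine Nat.le_floor ?_
    rw [le_div_iff₀ hσ]
    push_cast
    linarith
  have hdiff : ((n' : ℝ) - (m * n : ℕ)) * σ ≤ m * σ := by
    push_cast
    linarith
  have hle' : ((m * n : ℕ) : ℝ) ≤ n' := by exact_mod_cast hle
  set M := F x + (A + B * radiusBound F A P z₀ T x) with hM
  have hlow : ∀ j : ℕ, j ≤ n' → F x - F (L^[j] x) ≤ M := by
    intro j hj
    have hj' : (j : ℝ) ≤ n' := by exact_mod_cast hj
    have := H.energy_lower (T := T) hσ hPσ' hL (n := j) (by nlinarith) (Or.inr hx)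
    linarith
  have hM0 : 0 ≤ M := by simpa using hlow 0 (Nat.zero_le _)
  have h1 : dist (J^[n] x) (L^[m * n] x) ^ 2 ≤ Real.exp (2 * P * T) * (4 * (m * σ) * M) := by
    refine H.le_exp_mul hτ hPσ (hnτ.trans htT) (sq_nonneg _)
      ((hJ.dist_coarse_fine hY H.K_nonneg hσ hL hm (by linarith) (by linarith) (by linarith)
        hx n).trans ?_)
    have := hlow _ hle
    gcongr
  have h2 : dist (L^[n'] x) (L^[m * n] x) ^ 2 ≤ 2 * (m * σ) * M := by
    have h := hL.energy_antitone hσ (by linarith) (x := x) (i := m * n) (Or.inr hx) hle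
    have hd : F (L^[m * n] x) - F (L^[n'] x) ≤ M := by
      linarith [hlow n' le_rfl, (hL.iterate_dist_sq_le hσ (by linarith) hx (m * n)).1]
    refine h.2.trans ?_
    have h0 : 0 ≤ ((n' : ℝ) - (m * n : ℕ)) * σ := mul_nonneg (by linarith) hσ.le
    have h5 := mul_le_mul_of_nonneg_left hd h0
    have h6 := mul_le_mul_of_nonneg_right hdiff hM0
    linarith
  have htri := pow_le_pow_left₀ dist_nonneg
    (dist_triangle_right (J^[n] x) (L^[n'] x) (L^[m * n] x)) 2
  nlinarith [sq_nonneg (dist (J^[n] x) (L^[m * n] x) - dist (L^[n'] x) (L^[m * n] x))]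

/-- Regularizing effect: the energy becomes finite, with a bound depending only on the time. -/
lemma EnergyBound.energy_upper (H : EnergyBound D F K A B P z₀) (hσ : 0 < σ)
    (hPσ : P * σ ≤ 1 / 2) (hJ : IsResolvent D F (-K) σ J) {n : ℕ}
    (hn : n * σ ≤ T) (x : Y) : (n * σ) * (2 * F (J^[n] x)) ≤
      dist x z₀ ^ 2 + (n * σ) * (2 * F z₀ + K * radiusBound F A P z₀ T x) := by
  have h4 := H.four_mul_le hσ
  have hBσ := mul_nonneg H.B_nonneg hσ.le
  have hKσ := mul_nonneg H.K_nonneg hσ.le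
  set R := radiusBound F A P z₀ T x
  have key : ∀ j : ℕ, j ≤ n → dist (J^[j] x) z₀ ^ 2 + (j * σ) * (2 * F (J^[n] x)) ≤
      dist x z₀ ^ 2 + (j * σ) * (2 * F z₀ + K * R) := by
    intro j
    induction j with
    | zero => simp
    | succ j ih =>
      intro hj
      have h1 := ih (by omega)
      have h2 := (hJ (J^[j] x)).2 z₀ H.mem
      rw [← Function.iterate_succ_apply' J j x] at h2
      have hj' : ((j + 1 : ℕ) : ℝ) ≤ n := by exact_mod_cast hj
      have h3 := mul_le_mul_of_nonneg_left (H.dist_sq_le_radiusBound (T := T) hσ hPσ hJ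
        (n := j + 1) (by nlinarith) x) hKσ
      have h5 := mul_le_mul_of_nonneg_left (hJ.energy_antitone hσ (by linarith) (x := x)
        (Or.inl j.succ_ne_zero) hj).1 (by positivity : 0 ≤ 2 * σ)
      have h6 := sq_nonneg (dist (J^[j + 1] x) (J^[j] x))
      push_cast
      linarith
  have := key n le_rfl
  have := sq_nonneg (dist (J^[n] x) z₀)
  linarith

/-- Discrete flows are Lipschitz away from time zero, uniformly in the step. -/
lemma EnergyBound.exists_step_le (H : EnergyBound D F K A B P z₀) (hY : Cat0 Y) {a : ℝ}
    (ha : 0 < a) (haT : a ≤ T) (x : Y) : ∃ C : ℝ, 0 ≤ C ∧ ∀ (σ : ℝ) (J : Y → Y), 0 < σ →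
      P * σ ≤ 1 / 2 → σ ≤ a / 4 → IsResolvent D F (-K) σ J → ∀ j : ℕ, a ≤ j * σ → j * σ ≤ T →
      dist (J^[j + 1] x) (J^[j] x) ≤ C * σ := by
  set R := radiusBound F A P z₀ T x with hR
  set U := F z₀ + K * R / 2 + 2 / a * dist x z₀ ^ 2 + (A + B * R) with hU
  refine ⟨√(Real.exp (2 * P * T) * (8 / a * U)), Real.sqrt_nonneg _, ?_⟩
  intro σ J hσ hPσ hσa hJ j hja hjT
  have h4 := H.four_mul_le hσ
  have hBσ := mul_nonneg H.B_nonneg hσ.le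
  have hKσ := mul_nonneg H.K_nonneg hσ.le
  set n := ⌊a / (2 * σ)⌋₊ with hn
  have hn1 : n * (2 * σ) ≤ a := (le_div_iff₀ (by positivity)).mp (Nat.floor_le (by positivity))
  have hn2 : a < (n + 1) * (2 * σ) := (div_lt_iff₀ (by positivity)).mp (Nat.lt_floor_add_one _)
  have hn3 : a / 4 ≤ n * σ := by linarith
  have hn0 : n ≠ 0 := by
    intro h
    rw [h, Nat.cast_zero, zero_mul] at hn3
    linarith
  have h2n : n + n ≤ j := by
    have : ((n + n : ℕ) : ℝ) ≤ j := by
      refine le_of_mul_le_mul_right ?_ hσ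
      push_cast
      linarith
    exact_mod_cast this
  set X := dist (J^[j + 1] x) (J^[j] x) ^ 2 with hX
  set c := (Real.exp (2 * P * T))⁻¹ * X with hc
  have hstep : ∀ i ≤ j, c ≤ dist (J^[i + 1] x) (J^[i] x) ^ 2 := by
    intro i hi
    obtain ⟨k, rfl⟩ := Nat.exists_eq_add_of_le hi
    have hk : (k : ℝ) * σ ≤ T := by
      have : (0 : ℝ) ≤ i * σ := by positivity
      push_cast at hjT
      linarith
    have := H.contraction hY hσ hPσ hJ hk (J^[i + 1] x) (J^[i] x)
    rw [← Function.iterate_add_apply, ← Function.iterate_add_apply,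
      show k + (i + 1) = i + k + 1 by ring, show k + i = i + k by ring] at this
    rw [hc, inv_mul_le_iff₀ (Real.exp_pos _)]
    exact this
  have hsum : ∀ k ≤ n, k * c ≤ 2 * σ * (F (J^[n] x) - F (J^[n + k] x)) := by
    intro k
    induction k with
    | zero => simp
    | succ k ih =>
      intro hk
      have h1 := ih (by omega)
      have h2 := hstep (n + k) (by omega)
      have h3 := hJ.dist_sq_le (by linarith) (hJ.iterate_mem (x := x) (n := n + k)
        (Or.inl (by omega)))
      rw [← Function.iterate_succ_apply' J] at h3
      push_cast
      rw [← add_assoc]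
      linarith
  have hnT : n * σ ≤ T := by
    have : (0 : ℝ) ≤ n * σ := by positivity
    linarith
  have hup := H.energy_upper hσ hPσ hJ hnT x
  rw [← hR] at hup
  have hlo := H.energy_lower (T := T) hσ hPσ hJ (n := n + n) (x := x)
    (by push_cast; linarith) (Or.inl (by omega))
  rw [← hR] at hlo
  have hnσ : 0 < n * σ := by linarith
  have hup' : F (J^[n] x) ≤ F z₀ + K * R / 2 + 2 / a * dist x z₀ ^ 2 := by
    refine le_of_mul_le_mul_left ?_ hnσ
    have h5 : 1 / 2 ≤ (n * σ) * (2 / a) := by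
      rw [mul_div_assoc', le_div_iff₀ ha]
      linarith
    have h6 := mul_le_mul_of_nonneg_right h5 (sq_nonneg (dist x z₀))
    linarith
  have h7 := hsum n le_rfl
  have h8 : n * c ≤ 2 * σ * U := h7.trans (by gcongr; linarith)
  have hc0 : 0 ≤ c := by positivity
  have h9 : c ≤ 8 / a * U * σ ^ 2 := by
    have h10 : a / 4 * c ≤ 2 * σ ^ 2 * U := by
      have := mul_le_mul_of_nonneg_right hn3 hc0
      have := mul_le_mul_of_nonneg_right h8 hσ.le
      linarith
    rw [div_mul_eq_mul_div, div_mul_eq_mul_div, le_div_iff₀ ha]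
    linarith
  have h10 : X ≤ Real.exp (2 * P * T) * (8 / a * U) * σ ^ 2 := by
    rw [hc, inv_mul_le_iff₀ (Real.exp_pos _)] at h9
    linarith
  have h11 := Real.sqrt_le_sqrt h10
  rwa [hX, Real.sqrt_sq dist_nonneg, Real.sqrt_mul' _ (sq_nonneg σ), Real.sqrt_sq hσ.le] at h11

end UniformEstimates

section Limit

variable {Y : Type*} [MetricSpace Y] {D : Set Y} {F : Y → ℝ} {lam K A B P τ : ℝ} {z₀ y : Y}
  {J : ℕ → Y → Y}

/-- The piecewise constant discrete flow with steps `τ / 2 ^ k`. -/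
noncomputable def discreteFlow (τ : ℝ) (J : ℕ → Y → Y) (y : Y) (k : ℕ) (t : ℝ) : Y :=
  (J k)^[⌊t / (τ / 2 ^ k)⌋₊] y

lemma tendsto_div_two_pow (τ : ℝ) : Tendsto (fun k : ℕ => τ / 2 ^ k) atTop (𝓝 0) :=
  tendsto_const_nhds.div_atTop (tendsto_pow_atTop_atTop_of_one_lt one_lt_two)

lemma floor_mul_step_le {σ t : ℝ} (hσ : 0 < σ) (ht : 0 ≤ t) : ⌊t / σ⌋₊ * σ ≤ t :=
  (le_div_iff₀ hσ).mp (Nat.floor_le (by positivity))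

lemma sub_lt_floor_mul_step {σ : ℝ} (hσ : 0 < σ) (t : ℝ) : t - σ < ⌊t / σ⌋₊ * σ := by
  have := (div_lt_iff₀ hσ).mp (Nat.lt_floor_add_one (t / σ))
  linarith

lemma mul_step_le {P τ : ℝ} (hP : 0 ≤ P) (hτ : 0 < τ) (hPτ : P * τ ≤ 1 / 2) (k : ℕ) :
    P * (τ / 2 ^ k) ≤ 1 / 2 :=
  (mul_le_mul_of_nonneg_left (div_le_self hτ.le (one_le_pow₀ one_le_two)) hP).trans hPτ

lemma tendsto_floor_mul_step (hτ : 0 < τ) {t : ℝ} (ht : 0 ≤ t) :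
    Tendsto (fun k : ℕ => (⌊t / (τ / 2 ^ k)⌋₊ : ℝ) * (τ / 2 ^ k)) atTop (𝓝 t) := by
  have h := (tendsto_div_two_pow τ).const_sub t
  rw [sub_zero] at h
  exact tendsto_of_tendsto_of_tendsto_of_le_of_le h tendsto_const_nhds
    (fun k => (sub_lt_floor_mul_step (by positivity) t).le)
    (fun k => floor_mul_step_le (by positivity) ht)

lemma EnergyBound.uniformCauchySeqOn (H : EnergyBound D F K A B P z₀) (hY : Cat0 Y) (hτ : 0 < τ)
    (hPτ : P * τ ≤ 1 / 2) (hJ : ∀ k, IsResolvent D F (-K) (τ / 2 ^ k) (J k))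
    (hy : y ∈ closure D) (T : ℝ) :
    UniformCauchySeqOn (discreteFlow τ J y) atTop (Icc 0 T) := by
  suffices h : ∀ ε > 0, ∃ N : ℕ, ∀ k ≥ N, ∀ l ≥ k, ∀ t ∈ Icc (0 : ℝ) T,
      dist (discreteFlow τ J y k t) (discreteFlow τ J y l t) < ε by
    refine Metric.uniformCauchySeqOn_iff.mpr fun ε hε => ?_
    obtain ⟨N, hN⟩ := h ε hε
    refine ⟨N, fun k hk l hl t ht => ?_⟩
    rcases le_total k l with hkl | hkl
    · exact hN k hk l hkl t ht
    · rw [dist_comm]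
      exact hN l hl k hkl t ht
  intro ε hε
  obtain ⟨x, hxD, hx⟩ := Metric.mem_closure_iff.mp hy (ε / 3 / Real.exp (P * T)) (by positivity)
  rw [lt_div_iff₀' (Real.exp_pos _)] at hx
  set C := (8 * Real.exp (2 * P * T) + 4) * (F x + (A + B * radiusBound F A P z₀ T x)) with hC
  have hlim : Tendsto (fun k : ℕ => C * (τ / 2 ^ k)) atTop (𝓝 0) := by
    simpa using (tendsto_div_two_pow τ).const_mul C
  obtain ⟨N, hN⟩ := eventually_atTop.mp
    (hlim.eventually (gt_mem_nhds (by positivity : 0 < (ε / 3) ^ 2)))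
  refine ⟨N, fun k hk l hl t ht => ?_⟩
  have hstep : ∀ j : ℕ, dist (discreteFlow τ J y j t) (discreteFlow τ J x j t) < ε / 3 :=
    fun j => (H.dist_le_exp_mul hY (by positivity) (mul_step_le H.P_nonneg hτ hPτ j) (hJ j)
      ((floor_mul_step_le (by positivity) ht.1).trans ht.2) y x).trans_lt hx
  have hmid : dist (discreteFlow τ J x k t) (discreteFlow τ J x l t) < ε / 3 := by
    obtain ⟨p, rfl⟩ := Nat.exists_eq_add_of_le hl
    have hs : τ / 2 ^ k = ((2 ^ p : ℕ) : ℝ) * (τ / 2 ^ (k + p)) := by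
      push_cast
      rw [pow_add]
      field_simp
    refine lt_of_pow_lt_pow_left₀ 2 (by positivity) (lt_of_le_of_lt ?_ (hN k hk))
    have hPk := mul_step_le H.P_nonneg hτ hPτ k
    have hJk := hJ k
    unfold discreteFlow
    rw [hs] at hPk hJk ⊢
    exact H.dist_floor_sq_le hY (by positivity) (by positivity) hPk hJk (hJ (k + p)) hxD ht.1 ht.2
  have h1 := hstep k
  have h2 := hstep l
  have h3 := dist_triangle4 (discreteFlow τ J y k t) (discreteFlow τ J x k t)
    (discreteFlow τ J x l t) (discreteFlow τ J y l t)
  rw [dist_comm (discreteFlow τ J x l t)] at h3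
  linarith

lemma EnergyBound.exists_limit [CompleteSpace Y] (H : EnergyBound D F K A B P z₀) (hY : Cat0 Y)
    (hτ : 0 < τ) (hPτ : P * τ ≤ 1 / 2) (hJ : ∀ k, IsResolvent D F (-K) (τ / 2 ^ k) (J k))
    (hy : y ∈ closure D) :
    ∃ v : ℝ → Y, ∀ T, TendstoUniformlyOn (discreteFlow τ J y) v atTop (Icc 0 T) := by
  have hC := H.uniformCauchySeqOn hY hτ hPτ hJ hy
  have hlim : ∀ t : ℝ, ∃ w : Y, 0 ≤ t →
      Tendsto (fun k => discreteFlow τ J y k t) atTop (𝓝 w) := by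
    intro t
    by_cases ht : 0 ≤ t
    · obtain ⟨w, hw⟩ := cauchySeq_tendsto_of_complete ((hC t).cauchySeq ⟨ht, le_rfl⟩)
      exact ⟨w, fun _ => hw⟩
    · exact ⟨y, fun h => absurd h ht⟩
  choose v hv using hlim
  exact ⟨v, fun T => (hC T).tendstoUniformlyOn_of_tendsto fun t ht => hv t ht.1⟩

lemma EnergyBound.limit_lipschitz (H : EnergyBound D F K A B P z₀) (hY : Cat0 Y)
    (hτ : 0 < τ) (hPτ : P * τ ≤ 1 / 2) (hJ : ∀ k, IsResolvent D F (-K) (τ / 2 ^ k) (J k))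
    {v : ℝ → Y} (hv : ∀ t, 0 ≤ t → Tendsto (fun k => discreteFlow τ J y k t) atTop (𝓝 (v t)))
    {a b : ℝ} (ha : 0 < a) (hab : a ≤ b) :
    ∃ C : ℝ, 0 ≤ C ∧ ∀ s t, a ≤ s → s ≤ t → t ≤ b → dist (v s) (v t) ≤ C * (t - s) := by
  obtain ⟨C, hC0, hC⟩ := H.exists_step_le hY (half_pos ha) (by linarith : a / 2 ≤ b) y
  refine ⟨C, hC0, fun s t has hst htb => ?_⟩
  have hs : 0 ≤ s := by linarith
  have ht : 0 ≤ t := by linarith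
  have hlim : Tendsto (fun k : ℕ => C * (t - s + τ / 2 ^ k)) atTop (𝓝 (C * (t - s))) := by
    simpa using ((tendsto_div_two_pow τ).const_add (t - s)).const_mul C
  refine le_of_tendsto_of_tendsto ((hv s hs).dist (hv t ht)) hlim ?_
  filter_upwards [(tendsto_div_two_pow τ).eventually (gt_mem_nhds (by positivity : 0 < a / 8))]
    with k hk
  have hσ : 0 < τ / 2 ^ k := by positivity
  unfold discreteFlow
  set σ := τ / 2 ^ k with hσdef
  set n := ⌊s / σ⌋₊ with hn
  obtain ⟨p, hp⟩ := Nat.exists_eq_add_of_le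
    (Nat.floor_mono (by gcongr) : ⌊s / σ⌋₊ ≤ ⌊t / σ⌋₊)
  have h1 := sub_lt_floor_mul_step hσ s
  have h2 := floor_mul_step_le hσ ht
  rw [hp] at h2 ⊢
  rw [← hn] at h1 h2 ⊢
  have key : ∀ i ≤ p, dist ((J k)^[n] y) ((J k)^[n + i] y) ≤ i * (C * σ) := by
    intro i
    induction i with
    | zero => simp
    | succ i ih =>
      intro hi
      have hi' : ((i + 1 : ℕ) : ℝ) ≤ p := by exact_mod_cast hi
      have h3 := ih (by omega)
      have h4 := hC σ (J k) hσ (mul_step_le H.P_nonneg hτ hPτ k) (by linarith) (hJ k) (n + i)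
        (by
          have : (0 : ℝ) ≤ i * σ := by positivity
          push_cast
          linarith)
        (by
          have := mul_le_mul_of_nonneg_right hi' hσ.le
          push_cast at this h2 ⊢
          linarith)
      have h5 := dist_triangle_right ((J k)^[n] y) ((J k)^[n + (i + 1)] y) ((J k)^[n + i] y)
      rw [← add_assoc] at h5 ⊢
      push_cast
      linarith
  refine (key p le_rfl).trans ?_
  push_cast at h2
  have : p * σ ≤ t - s + σ := by linarith
  nlinarith

lemma EnergyBound.limit_tendsto_start (H : EnergyBound D F K A B P z₀) (hY : Cat0 Y)
    (hτ : 0 < τ) (hPτ : P * τ ≤ 1 / 2) (hJ : ∀ k, IsResolvent D F (-K) (τ / 2 ^ k) (J k))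
    (hy : y ∈ closure D) {v : ℝ → Y}
    (hv : ∀ t, 0 ≤ t → Tendsto (fun k => discreteFlow τ J y k t) atTop (𝓝 (v t))) :
    Tendsto v (𝓝[>] 0) (𝓝 y) := by
  refine Metric.tendsto_nhds.mpr fun ε hε => ?_
  have hexp : 1 ≤ Real.exp (P * 1) := Real.one_le_exp (by linarith [H.P_nonneg])
  obtain ⟨x, hxD, hx⟩ := Metric.mem_closure_iff.mp hy (ε / 4 / Real.exp (P * 1)) (by positivity)
  rw [lt_div_iff₀' (Real.exp_pos _)] at hx
  have hx' : dist y x < ε / 4 := lt_of_le_of_lt (le_mul_of_one_le_left dist_nonneg hexp) hx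
  set C := |2 * (F x + (A + B * radiusBound F A P z₀ 1 x))| with hC
  have hlim : Tendsto (fun t : ℝ => C * t) (𝓝[>] 0) (𝓝 0) := by
    have : Tendsto (fun t : ℝ => C * t) (𝓝 0) (𝓝 (C * 0)) := (continuous_const_mul C).tendsto 0
    rw [mul_zero] at this
    exact this.mono_left nhdsWithin_le_nhds
  filter_upwards [hlim.eventually (gt_mem_nhds (by positivity : 0 < (ε / 4) ^ 2)),
    Ioo_mem_nhdsGT (zero_lt_one' ℝ)] with t hCt ht
  refine lt_of_le_of_lt (b := 3 * (ε / 4)) ?_ (by linarith)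
  refine le_of_tendsto ((hv t ht.1.le).dist tendsto_const_nhds) (Eventually.of_forall fun k => ?_)
  have hσ : 0 < τ / 2 ^ k := by positivity
  have hfl := floor_mul_step_le hσ ht.1.le
  have hPk := mul_step_le H.P_nonneg hτ hPτ k
  have h1 := (H.dist_le_exp_mul hY hσ hPk (hJ k) (hfl.trans ht.2.le) y x).trans_lt hx
  have h2 : dist ((J k)^[⌊t / (τ / 2 ^ k)⌋₊] x) x < ε / 4 := by
    refine lt_of_pow_lt_pow_left₀ 2 (by positivity) (lt_of_le_of_lt ?_ hCt)
    refine (H.dist_start_sq_le hσ hPk (hJ k) (hfl.trans ht.2.le) hxD).trans ?_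
    have : (0 : ℝ) ≤ ⌊t / (τ / 2 ^ k)⌋₊ * (τ / 2 ^ k) := by positivity
    gcongr
    exact le_abs_self _
  have h3 := dist_triangle4 (discreteFlow τ J y k t) (discreteFlow τ J x k t) x y
  rw [dist_comm x y] at h3
  unfold discreteFlow at h3 ⊢
  linarith

/-- The limit of the discrete flows satisfies a local integrated form of the evolution variational
inequality. -/
lemma limit_dist_sq_sub_le (hτ : 0 < τ) (hJ : ∀ k, IsResolvent D F lam (τ / 2 ^ k) (J k))
    {v : ℝ → Y} (hv : ∀ T, TendstoUniformlyOn (discreteFlow τ J y) v atTop (Icc 0 T))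
    {z x : Y} (hz : z ∈ D) {s t ρ c c' : ℝ} (hs : 0 ≤ s) (hst : s ≤ t) (hρ : 0 < ρ)
    (hx : ∀ r ∈ Icc s t, dist (v r) x < ρ / 2)
    (hc : ∀ w ∈ D, dist w x < ρ → c < F w ∧ c' < lam / 2 * dist w z ^ 2) :
    dist (v t) z ^ 2 / 2 - dist (v s) z ^ 2 / 2 ≤ (t - s) * (F z - c - c') := by
  have ht : 0 ≤ t := hs.trans hst
  have hlim : ∀ r ∈ Icc 0 t, Tendsto (fun k => dist (discreteFlow τ J y k r) z ^ 2 / 2) atTop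
      (𝓝 (dist (v r) z ^ 2 / 2)) := fun r hr =>
    ((((hv t).tendsto_at hr).dist tendsto_const_nhds).pow 2).div_const 2
  refine le_of_tendsto_of_tendsto ((hlim t ⟨ht, le_rfl⟩).sub (hlim s ⟨hs, hst⟩))
    (((tendsto_floor_mul_step hτ ht).sub (tendsto_floor_mul_step hτ hs)).mul_const _) ?_
  filter_upwards [Metric.tendstoUniformlyOn_iff.mp (hv t) (ρ / 2) (by positivity)] with k hk
  have hσ : 0 < τ / 2 ^ k := by positivity
  have hclose : ∀ i : ℕ, s ≤ i * (τ / 2 ^ k) → i * (τ / 2 ^ k) ≤ t →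
      dist ((J k)^[i] y) x < ρ := by
    intro i hsi hit
    have h1 := hk _ ⟨hs.trans hsi, hit⟩
    have h2 := hx _ ⟨hsi, hit⟩
    have h3 : discreteFlow τ J y k (i * (τ / 2 ^ k)) = (J k)^[i] y := by
      unfold discreteFlow
      rw [mul_div_cancel_right₀ _ hσ.ne', Nat.floor_natCast]
    rw [h3] at h1
    linarith [dist_triangle_left ((J k)^[i] y) x (v (i * (τ / 2 ^ k)))]
  unfold discreteFlow
  set σ := τ / 2 ^ k with hσdef
  set n := ⌊s / σ⌋₊ with hn
  obtain ⟨p, hp⟩ := Nat.exists_eq_add_of_le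
    (Nat.floor_mono (by gcongr) : ⌊s / σ⌋₊ ≤ ⌊t / σ⌋₊)
  have h1 := sub_lt_floor_mul_step hσ s
  have h2 := floor_mul_step_le hσ ht
  rw [hp] at h2 ⊢
  rw [← hn] at h1 h2 ⊢
  have key : ∀ i ≤ p, dist ((J k)^[n + i] y) z ^ 2 / 2 - dist ((J k)^[n] y) z ^ 2 / 2 ≤
      i * σ * (F z - c - c') := by
    intro i
    induction i with
    | zero => simp
    | succ i ih =>
      intro hi
      have hi' : ((i + 1 : ℕ) : ℝ) ≤ p := by exact_mod_cast hi
      have h3 := ih (by omega)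
      have h4 := (hJ k ((J k)^[n + i] y)).2 z hz
      have hd := hclose (n + i + 1)
        (by
          have : (0 : ℝ) ≤ i * σ := by positivity
          push_cast
          linarith)
        (by
          have := mul_le_mul_of_nonneg_right hi' hσ.le
          push_cast at this h2 ⊢
          linarith)
      have h5 := hc _ ((hJ k).iterate_mem (Or.inl (Nat.succ_ne_zero _))) hd
      rw [← Function.iterate_succ_apply' (J k) (n + i) y, ← hσdef] at h4
      have h6 := mul_le_mul_of_nonneg_left h5.1.le hσ.le
      have h7 := mul_le_mul_of_nonneg_left h5.2.le hσ.le
      have h8 := sq_nonneg (dist ((J k)^[n + i + 1] y) ((J k)^[n + i] y))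
      rw [← add_assoc]
      push_cast
      linarith
  refine (key p le_rfl).trans (le_of_eq ?_)
  push_cast
  ring

lemma limit_deriv_le (hτ : 0 < τ) (hJ : ∀ k, IsResolvent D F lam (τ / 2 ^ k) (J k))
    (hlsc : LscExtended D F) {v : ℝ → Y}
    (hv : ∀ T, TendstoUniformlyOn (discreteFlow τ J y) v atTop (Icc 0 T))
    {z : Y} (hz : z ∈ D) {t d' c c' : ℝ} (ht : 0 < t) (hcont : ContinuousAt v t)
    (hd : HasDerivAt (fun s => dist (v s) z ^ 2 / 2) d' t) (hc : v t ∈ D → c < F (v t))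
    (hc' : c' < lam / 2 * dist (v t) z ^ 2) : d' ≤ F z - c - c' := by
  have hev : ∀ᶠ w in 𝓝 (v t), c' < lam / 2 * dist w z ^ 2 :=
    (Continuous.tendsto (by fun_prop : Continuous fun w => lam / 2 * dist w z ^ 2) (v t)).eventually
      (lt_mem_nhds hc')
  obtain ⟨ρ, hρ, hball⟩ := Metric.eventually_nhds_iff.mp ((hlsc (v t) c hc).and hev)
  obtain ⟨η, hη, hclose⟩ := Metric.eventually_nhds_iff.mp
    (Metric.tendsto_nhds.mp hcont (ρ / 2) (by positivity))
  refine le_of_tendsto hd.tendsto_slope_zero_right ?_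
  filter_upwards [Ioo_mem_nhdsGT hη] with h hh
  rw [smul_eq_mul, inv_mul_le_iff₀ hh.1]
  have := limit_dist_sq_sub_le hτ hJ hv hz (x := v t) ht.le (by linarith [hh.1] : t ≤ t + h) hρ
    (fun r hr => hclose (by
      rw [Real.dist_eq, abs_of_nonneg (by linarith [hr.1])]
      linarith [hr.2, hh.2]))
    (fun w hw hwx => ⟨(hball hwx).1 hw, (hball hwx).2⟩)
  simpa using this

end Limit

section Assembly

variable {Y : Type*} [MetricSpace Y] {v : ℝ → Y}

lemma locAbsCont_of_lipschitz (hv : ∀ a b : ℝ, 0 < a → a ≤ b →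
    ∃ C : ℝ, 0 ≤ C ∧ ∀ s t, a ≤ s → s ≤ t → t ≤ b → dist (v s) (v t) ≤ C * (t - s)) :
    LocAbsCont v := by
  intro a b ha hab
  obtain ⟨C, hC0, hC⟩ := hv a b ha hab
  refine ⟨fun _ => C, fun _ => hC0, continuous_const.integrableOn_Icc, fun s hs t ht hst => ?_⟩
  rw [intervalIntegral.integral_const, smul_eq_mul, mul_comm]
  exact hC s t hs.1 hst ht.2

lemma lipschitzOnWith_of_lipschitz {a b C : ℝ} (hC0 : 0 ≤ C)
    (hC : ∀ s t, a ≤ s → s ≤ t → t ≤ b → dist (v s) (v t) ≤ C * (t - s)) :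
    LipschitzOnWith C.toNNReal v (Icc a b) := by
  refine LipschitzOnWith.of_dist_le_mul fun s hs t ht => ?_
  rw [Real.coe_toNNReal _ hC0, Real.dist_eq]
  rcases le_total s t with hst | hst
  · rw [abs_sub_comm, abs_of_nonneg (by linarith)]
    exact hC s t hs.1 hst ht.2
  · rw [dist_comm, abs_of_nonneg (by linarith)]
    exact hC t s ht.1 hst hs.2

lemma ae_differentiableAt_dist_sq (hv : ∀ a b : ℝ, 0 < a → a ≤ b →
    ∃ C : ℝ≥0, LipschitzOnWith C v (Icc a b)) (z : Y) :
    ∀ᵐ t ∂(volume.restrict (Ioi (0 : ℝ))),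
      DifferentiableAt ℝ (fun s => dist (v s) z ^ 2 / 2) t := by
  have hloc : LocallyBoundedVariationOn (fun s => dist (v s) z) (Ioi 0) := by
    intro a b ha hb
    rcases le_or_gt a b with hab | hab
    · obtain ⟨C, hC⟩ := hv a b ha hab
      have hlip : LipschitzOnWith (1 * C) (fun s => dist (v s) z) (Icc a b) :=
        (LipschitzWith.dist_left z).comp_lipschitzOnWith hC
      have := hlip.locallyBoundedVariationOn a b ⟨le_rfl, hab⟩ ⟨hab, le_rfl⟩
      exact this.mono (fun r hr => ⟨hr.2, hr.2⟩)
    · rw [Icc_eq_empty (not_le.mpr hab), inter_empty]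
      simp [BoundedVariationOn]
  rw [ae_restrict_iff' measurableSet_Ioi]
  filter_upwards [hloc.ae_differentiableWithinAt_of_mem] with t ht htpos
  exact (((ht htpos).differentiableAt (Ioi_mem_nhds htpos)).pow 2).div_const 2

end Assembly

/-- **Existence of gradient flow trajectories**: for a `λ`-convex lower semicontinuous
functional on a CAT(0) space and any starting point in the closure of the domain, there
exists a gradient flow trajectory. -/
theorem gradientFlow_exists {Y : Type*} [MetricSpace Y] [CompleteSpace Y]
    (hY : Cat0 Y) (lam : ℝ) (E : Y → EReal) (hbot : ∀ y, E y ≠ ⊥)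
    (hconv : LamConvex lam E) (hlsc : LowerSemicontinuous E)
    (y : Y) (hy : y ∈ closure {z : Y | E z ≠ ⊤}) :
    ∃ ytraj : ℝ → Y, GradientFlow lam E y ytraj := by
  obtain ⟨z₀, hz₀⟩ : {z : Y | E z ≠ ⊤}.Nonempty := closure_nonempty_iff.mp ⟨y, hy⟩
  set D : Set Y := {z : Y | E z ≠ ⊤} with hD
  set F : Y → ℝ := fun z => (E z).toReal with hF
  have hconvF : LamConvexOn D F lam := hconv.lamConvexOn hbot
  have hlscF : LscExtended D F := hlsc.lscExtended hbot
  set K := max (-lam) 0 with hK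
  have hK0 : 0 ≤ K := le_max_right _ _
  have hKlam : -K ≤ lam := by linarith [le_max_left (-lam) 0]
  obtain ⟨A, B, hB, hlow⟩ := exists_quadratic_lower_bound hY.1 hK0 (hconvF.mono hKlam) hlscF hz₀
  set P := 4 * K + 4 * B + 1 with hP
  have hP0 : 0 < P := by positivity
  have H : EnergyBound D F K A B P z₀ := ⟨hK0, hB, by linarith, hz₀, hlow⟩
  set τ := 1 / (2 * P) with hτdef
  have hτ : 0 < τ := by positivity
  have hPτ : P * τ ≤ 1 / 2 := by
    rw [hτdef]
    field_simp
    exact le_rfl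
  have hres : ∀ k : ℕ, ∃ J : Y → Y, IsResolvent D F lam (τ / 2 ^ k) J := by
    intro k
    have hσ : 0 < τ / 2 ^ k := by positivity
    have h1 := mul_step_le hP0.le hτ hPτ k
    have h2 := H.four_mul_le hσ
    have h3 := mul_nonneg hK0 hσ.le
    have h4 := mul_nonneg hB hσ.le
    have h5 := mul_le_mul_of_nonneg_right hKlam hσ.le
    exact exists_isResolvent hY hσ hconvF hlscF hz₀ hB hlow (by linarith) (by linarith)
  choose J hJ using hres
  have hJK : ∀ k, IsResolvent D F (-K) (τ / 2 ^ k) (J k) := fun k =>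
    (hJ k).mono (by positivity) hKlam
  obtain ⟨v, hv⟩ := H.exists_limit hY hτ hPτ hJK hy
  have hvt : ∀ t, 0 ≤ t → Tendsto (fun k => discreteFlow τ J y k t) atTop (𝓝 (v t)) :=
    fun t ht => (hv t).tendsto_at ⟨ht, le_rfl⟩
  have hlip : ∀ a b : ℝ, 0 < a → a ≤ b → ∃ C : ℝ, 0 ≤ C ∧
      ∀ s t, a ≤ s → s ≤ t → t ≤ b → dist (v s) (v t) ≤ C * (t - s) :=
    fun a b ha hab => H.limit_lipschitz hY hτ hPτ hJK hvt ha hab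
  have hlip' : ∀ a b : ℝ, 0 < a → a ≤ b → ∃ C : ℝ≥0, LipschitzOnWith C v (Icc a b) := by
    intro a b ha hab
    obtain ⟨C, hC0, hC⟩ := hlip a b ha hab
    exact ⟨_, lipschitzOnWith_of_lipschitz hC0 hC⟩
  refine ⟨v, locAbsCont_of_lipschitz hlip, H.limit_tendsto_start hY hτ hPτ hJK hy hvt,
    fun z => ?_⟩
  filter_upwards [ae_differentiableAt_dist_sq hlip' z, ae_restrict_mem measurableSet_Ioi]
    with t hdiff ht
  have ht0 : 0 < t := ht
  refine ⟨_, hdiff.hasDerivAt, ?_⟩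
  by_cases hz : E z = ⊤
  · rw [hz]
    exact le_top
  have hcont : ContinuousAt v t := by
    obtain ⟨C, hC⟩ := hlip' (t / 2) (t + 1) (by positivity) (by linarith)
    exact hC.continuousOn.continuousAt (Icc_mem_nhds (by linarith) (by linarith))
  set d' := deriv (fun s => dist (v s) z ^ 2 / 2) t
  have key : ∀ c c' : ℝ, (v t ∈ D → c < F (v t)) → c' < lam / 2 * dist (v t) z ^ 2 →
      d' ≤ F z - c - c' := fun c c' hc hc' =>
    limit_deriv_le hτ hJ hlscF hv hz ht0 hcont hdiff.hasDerivAt hc hc'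
  have hvD : v t ∈ D := by
    by_contra hvD
    have := key (F z - (lam / 2 * dist (v t) z ^ 2 - 1) - d' + 1)
      (lam / 2 * dist (v t) z ^ 2 - 1) (fun h => absurd h hvD) (by linarith)
    linarith
  have hreal : d' + F (v t) + lam / 2 * dist (v t) z ^ 2 ≤ F z := by
    refine le_of_forall_pos_le_add fun ε hε => ?_
    have := key (F (v t) - ε / 2) (lam / 2 * dist (v t) z ^ 2 - ε / 2)
      (fun _ => by linarith) (by linarith)
    linarith
  rw [← EReal.coe_toReal hvD (hbot _), ← EReal.coe_toReal hz (hbot _)]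
  exact_mod_cast hreal
end
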